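/- arXiv:math/0703836 — 2 statements merged into one kernel-verified Lean document; each statement's English description precedes it below -/
import Mathlib

section
/- Let β ∈ (0,1). Then for any LD-sets C ⊆ X and D ⊆ X for Q, any initial probability measures ν and ν' on (X,𝒳), any function V : X → [1,∞), and any observation sequence y_{0:n} for which both filtering distributions are well defined, ‖φ_{ν,n}[y_{0:n}] − φ_{ν',n}[y_{0:n}]‖_TV ≤ ρ_C^{βn} + [ ∏_{i=0}^n Υ_X(y_i) · max_{I ⊆ {0,…,n}, |I| = a_n} ( ∏_{i∈I} Υ_{C^c}(y_i) · ∏_{i∉I} Υ_X(y_i) ) ] / [ (ε⁻_D)^{2(n−1)} · Φ_{ν,D}(y₀,y₁) · Φ_{ν',D}(y₀,y₁) · ∏_{i=2}^n Ψ_D(y_i)² ] · ν(V)·ν'(V), where a_n := ⌊n(1−β)/2⌋. -/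
open MeasureTheory ProbabilityTheory Filter
open scoped ENNReal

/-- A set `C` is a local Doeblin (LD) set for the kernel `Q`, with minorizing/majorizing
measure `lam` and constants `em, ep`. -/
def IsLDSet {X : Type*} [MeasurableSpace X] (Q : Kernel X X) (C : Set X)
    (lam : Measure X) (em ep : ℝ) : Prop :=
  MeasurableSet C ∧ 0 < lam C ∧ 0 < em ∧ 0 < ep ∧
    ∀ x ∈ C, ∀ A : Set X, MeasurableSet A →
      ENNReal.ofReal em * lam (A ∩ C) ≤ Q x (A ∩ C) ∧
        Q x (A ∩ C) ≤ ENNReal.ofReal ep * lam (A ∩ C)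

/-- `QV(x) = ∫ V dQ(x,·)` for a drift function `V`. -/
noncomputable def kernelV {X : Type*} [MeasurableSpace X] (Q : Kernel X X) (V : X → ℝ)
    (x : X) : ℝ≥0∞ :=
  ∫⁻ x', ENNReal.ofReal (V x') ∂(Q x)

/-- `Υ_A(y) = sup_{x ∈ A} g(x,y) QV(x)/V(x)`. -/
noncomputable def Ups {X Y : Type*} [MeasurableSpace X] (Q : Kernel X X)
    (g : X → Y → ℝ) (V : X → ℝ) (A : Set X) (y : Y) : ℝ≥0∞ :=
  ⨆ x ∈ A, ENNReal.ofReal (g x y) * kernelV Q V x / ENNReal.ofReal (V x)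

/-- `Ψ_D(y) = λ_D(g(·,y) 1_D)`. -/
noncomputable def Psi {X Y : Type*} [MeasurableSpace X] (g : X → Y → ℝ)
    (lam : Measure X) (D : Set X) (y : Y) : ℝ≥0∞ :=
  ∫⁻ x in D, ENNReal.ofReal (g x y) ∂lam

/-- `Φ_{ν,D}(y₀,y₁) = ν[g(·,y₀) Q (g(·,y₁) 1_D)]`. -/
noncomputable def Phi {X Y : Type*} [MeasurableSpace X] (Q : Kernel X X)
    (g : X → Y → ℝ) (ν : Measure X) (D : Set X) (y0 y1 : Y) : ℝ≥0∞ :=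
  ∫⁻ x0, ENNReal.ofReal (g x0 y0) * ∫⁻ x1 in D, ENNReal.ofReal (g x1 y1) ∂(Q x0) ∂ν

/-- The unnormalized filtering measures: `filtSeq Q g ν y n` has total mass
`∫ ν(dx₀) g(x₀,y₀) ∏_{i=1}^n Q(x_{i−1},dx_i) g(x_i,y_i)`. -/
noncomputable def filtSeq {X Y : Type*} [MeasurableSpace X] (Q : Kernel X X)
    (g : X → Y → ℝ) (ν : Measure X) (y : ℕ → Y) : ℕ → Measure X
  | 0 => ν.withDensity (fun x => ENNReal.ofReal (g x (y 0)))
  | n + 1 => ((filtSeq Q g ν y n).bind (fun x => Q x)).withDensity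
      (fun x => ENNReal.ofReal (g x (y (n + 1))))

/-- The filtering distribution `φ_{ν,n}[y_{0:n}]` (normalized version of `filtSeq`). -/
noncomputable def filt {X Y : Type*} [MeasurableSpace X] (Q : Kernel X X)
    (g : X → Y → ℝ) (ν : Measure X) (y : ℕ → Y) (n : ℕ) : Measure X :=
  (filtSeq Q g ν y n Set.univ)⁻¹ • filtSeq Q g ν y n

/-- The total variation distance between two (finite) measures,
`sup_A |μ(A) − ν(A)|` over measurable sets `A`. -/
noncomputable def tvDist {X : Type*} [MeasurableSpace X] (μ ν : Measure X) : ℝ :=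
  ⨆ A : {S : Set X // MeasurableSet S}, |(μ A.1).toReal - (ν A.1).toReal|

namespace HMMAux

open scoped Classical in
lemma contr {X : Type*} [MeasurableSpace X] (q q' l : Measure X) [IsProbabilityMeasure q]
    [IsProbabilityMeasure q'] [IsFiniteMeasure l] (C : Set X) (hC : MeasurableSet C)
    (e p : ℝ≥0∞) (he : e ≠ ⊤) (h1 : e • l ≤ q.restrict C) (h1' : e • l ≤ q'.restrict C)
    (h2 : q.restrict C ≤ p • l) (h2' : q'.restrict C ≤ p • l)
    (r κ : ℝ≥0∞) (hrκ : r + κ = 1) (hκ : κ * (p * p) ≤ e * e)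
    (a h : X × X → ℝ≥0∞) (ha : Measurable a) (hh : Measurable h)
    (hle : ∀ z, a z ≤ a z.swap + h z) :
    ∫⁻ z, a z ∂(q.prod q') ≤ ∫⁻ z, a z.swap ∂(q.prod q') +
      ∫⁻ z, (if z ∈ C ×ˢ C then r else 1) * h z ∂(q.prod q') := by
  have hCC : MeasurableSet (C ×ˢ C) := hC.prod hC
  have hκ1 : κ ≤ 1 := by rw [← hrκ]; exact le_add_self
  set P := q.prod q' with hP
  set Pc := P.restrict (C ×ˢ C) with hPc
  have hPc' : Pc = (q.restrict C).prod (q'.restrict C) := (Measure.prod_restrict C C).symm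
  set Lm : Measure (X × X) := (e • l).prod (e • l) with hLm
  have : IsFiniteMeasure (e • l) := Measure.smul_finite l he
  have hL1 : Lm ≤ Pc := by
    rw [hPc', hLm]
    exact Measure.prod_mono h1 h1'
  have hL2 : κ • Pc ≤ Lm := by
    have hLm' : Lm = (e * e) • l.prod l := by
      rw [hLm, Measure.prod_smul_left, Measure.prod_smul_right, smul_smul]
    have : Pc ≤ (p * p) • l.prod l := by
      rw [hPc']
      refine (Measure.prod_mono h2 h2').trans (le_of_eq ?_)
      rw [Measure.prod_smul_left, Measure.prod_smul_right, smul_smul]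
    rw [hLm']
    intro s
    have h3 := this s
    simp only [Measure.smul_apply, smul_eq_mul] at h3 ⊢
    calc κ * Pc s ≤ κ * (p * p * (l.prod l) s) := by gcongr
      _ = (κ * (p * p)) * (l.prod l) s := by ring
      _ ≤ _ := by gcongr
  have hsub : Pc - Lm + Lm = Pc := Measure.sub_add_cancel_of_le hL1
  set Sm := Pc - Lm with hR
  have hRle : Sm ≤ r • Pc := by
    intro s
    have e1 : Sm s + Lm s = Pc s := by rw [← Measure.add_apply, hsub]
    have e2 : κ * Pc s ≤ Lm s := hL2 s
    have e3 : r * Pc s + κ * Pc s = Pc s := by rw [← add_mul, hrκ, one_mul]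
    simp only [Measure.smul_apply, smul_eq_mul]
    have hfin : κ * Pc s ≠ ⊤ :=
      ENNReal.mul_ne_top (ne_top_of_le_ne_top ENNReal.one_ne_top hκ1) (measure_ne_top _ _)
    refine ENNReal.le_of_add_le_add_right hfin ?_
    rw [e3]
    calc Sm s + κ * Pc s ≤ Sm s + Lm s := by gcongr
      _ = Pc s := e1
  have hsym : ∫⁻ z, a z ∂Lm = ∫⁻ z, a z.swap ∂Lm := (lintegral_prod_swap a).symm
  have hmain : ∫⁻ z, a z ∂Pc ≤ ∫⁻ z, a z.swap ∂Pc + r * ∫⁻ z, h z ∂Pc := by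
    calc ∫⁻ z, a z ∂Pc = ∫⁻ z, a z ∂Sm + ∫⁻ z, a z ∂Lm := by
          rw [← lintegral_add_measure, hsub]
      _ ≤ (∫⁻ z, a z.swap ∂Sm + ∫⁻ z, h z ∂Sm) + ∫⁻ z, a z.swap ∂Lm := by
          rw [hsym, ← lintegral_add_right _ hh]
          gcongr with z
          exact hle z
      _ = (∫⁻ z, a z.swap ∂Sm + ∫⁻ z, a z.swap ∂Lm) + ∫⁻ z, h z ∂Sm := by ring
      _ = ∫⁻ z, a z.swap ∂Pc + ∫⁻ z, h z ∂Sm := by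
          rw [← lintegral_add_measure, hsub]
      _ ≤ _ := by
          gcongr
          refine (lintegral_mono' hRle le_rfl).trans (le_of_eq ?_)
          rw [lintegral_smul_measure, smul_eq_mul]
  have hout : ∫⁻ z in (C ×ˢ C)ᶜ, a z ∂P ≤
      ∫⁻ z in (C ×ˢ C)ᶜ, a z.swap ∂P + ∫⁻ z in (C ×ˢ C)ᶜ, h z ∂P := by
    rw [← lintegral_add_right _ hh]
    exact lintegral_mono hle
  have e4 : ∫⁻ z in (C ×ˢ C), (if z ∈ C ×ˢ C then r else 1) * h z ∂P = r * ∫⁻ z, h z ∂Pc := by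
    rw [← lintegral_const_mul _ hh]
    refine setLIntegral_congr_fun hCC ?_
    intro z hz
    simp only [if_pos hz]
  have e5 : ∫⁻ z in (C ×ˢ C)ᶜ, (if z ∈ C ×ˢ C then r else 1) * h z ∂P
      = ∫⁻ z in (C ×ˢ C)ᶜ, h z ∂P := by
    refine setLIntegral_congr_fun hCC.compl ?_
    intro z hz
    simp only [if_neg hz, one_mul]
  rw [← lintegral_add_compl a hCC, ← lintegral_add_compl (fun z => a z.swap) hCC,
    ← lintegral_add_compl (fun z => (if z ∈ C ×ˢ C then r else 1) * h z) hCC, e4, e5]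
  calc _ ≤ (∫⁻ z, a z.swap ∂Pc + r * ∫⁻ z, h z ∂Pc) + (∫⁻ z in (C ×ˢ C)ᶜ, a z.swap ∂P +
        ∫⁻ z in (C ×ˢ C)ᶜ, h z ∂P) := add_le_add hmain hout
    _ = _ := by ring

/-- Backward recursion. -/
noncomputable def bk {X : Type*} [MeasurableSpace X] (Q : Kernel X X) (f : X → ℝ≥0∞) :
    ℕ → (ℕ → X → ℝ≥0∞) → X → ℝ≥0∞
  | 0, gs => fun x => gs 0 x * f x
  | n + 1, gs => fun x => gs 0 x * ∫⁻ x', bk Q f n (fun i => gs (i + 1)) x' ∂(Q x)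

lemma measurable_bk {X : Type*} [MeasurableSpace X] (Q : Kernel X X)
    (f : X → ℝ≥0∞) (hf : Measurable f) (n : ℕ) :
    ∀ (gs : ℕ → X → ℝ≥0∞) (_ : ∀ i, Measurable (gs i)), Measurable (bk Q f n gs) := by
  induction n with
  | zero => intro gs hgs; exact (hgs 0).mul hf
  | succ n ih =>
    intro gs hgs
    exact (hgs 0).mul (Measurable.lintegral_kernel (ih _ (fun i => hgs (i + 1))))

lemma bk_mono {X : Type*} [MeasurableSpace X] (Q : Kernel X X)
    (f f' : X → ℝ≥0∞) (hf : ∀ x, f x ≤ f' x) (n : ℕ) :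
    ∀ (gs : ℕ → X → ℝ≥0∞) (x : X), bk Q f n gs x ≤ bk Q f' n gs x := by
  induction n with
  | zero => intro gs x; exact mul_le_mul_right (hf x) _
  | succ n ih =>
    intro gs x
    exact mul_le_mul_right (lintegral_mono (ih _)) _

lemma bk_le {X : Type*} [MeasurableSpace X] (Q : Kernel X X) [IsMarkovKernel Q]
    (V : X → ℝ≥0∞) (hVm : Measurable V) (hV : ∀ x, 1 ≤ V x) (n : ℕ) :
    ∀ (gs : ℕ → X → ℝ≥0∞) (U : ℕ → ℝ≥0∞)
      (_ : ∀ i x, gs i x * ∫⁻ x', V x' ∂(Q x) ≤ U i * V x) (x : X),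
      bk Q (fun _ => 1) n gs x ≤ (∏ i ∈ Finset.range (n + 1), U i) * V x := by
  induction n with
  | zero =>
    intro gs U hU x
    simp only [bk, zero_add, Finset.range_one, Finset.prod_singleton]
    refine le_trans ?_ (hU 0 x)
    gcongr
    calc (1 : ℝ≥0∞) = ∫⁻ _, 1 ∂(Q x) := by simp
      _ ≤ _ := lintegral_mono hV
  | succ n ih =>
    intro gs U hU x
    rw [Finset.prod_range_succ']
    simp only [bk]
    calc _ ≤ gs 0 x * ∫⁻ x', (∏ i ∈ Finset.range (n + 1), U (i + 1)) * V x' ∂(Q x) := by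
          gcongr with x'
          exact ih _ (fun i => U (i + 1)) (fun i x => hU (i + 1) x) x'
      _ = (∏ i ∈ Finset.range (n + 1), U (i + 1)) * (gs 0 x * ∫⁻ x', V x' ∂(Q x)) := by
          rw [lintegral_const_mul _ hVm]; ring
      _ ≤ (∏ i ∈ Finset.range (n + 1), U (i + 1)) * (U 0 * V x) := by
          exact mul_le_mul_right (hU 0 x) _
      _ = _ := by ring

/-- The maximum over index sets. -/
noncomputable def Mx (n : ℕ) (U Uc : ℕ → ℝ≥0∞) (a : ℕ) : ℝ≥0∞ :=
  (Finset.powersetCard a (Finset.range (n + 1))).sup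
    (fun I => (∏ i ∈ I, Uc i) * ∏ i ∈ Finset.range (n + 1) \ I, U i)

lemma range_sdiff_aux (n : ℕ) (I : Finset ℕ) :
    Finset.range (n + 2) \ (I.map (addRightEmbedding 1)) =
      insert 0 ((Finset.range (n + 1) \ I).map (addRightEmbedding 1)) := by
  ext i
  rcases i with _ | i <;> simp

lemma range_sdiff_aux' (n : ℕ) (I : Finset ℕ) :
    Finset.range (n + 2) \ insert 0 (I.map (addRightEmbedding 1)) =
      ((Finset.range (n + 1) \ I).map (addRightEmbedding 1)) := by
  ext i
  rcases i with _ | i <;> simp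

lemma Mx_step (n : ℕ) (U Uc : ℕ → ℝ≥0∞) (a : ℕ) :
    Mx n (fun i => U (i + 1)) (fun i => Uc (i + 1)) a * U 0 ≤ Mx (n + 1) U Uc a := by
  rcases (Finset.powersetCard a (Finset.range (n + 1))).eq_empty_or_nonempty with h | h
  · simp [Mx, h]
  · obtain ⟨I, hI, hIe⟩ := Finset.exists_mem_eq_sup _ h
      (fun I => (∏ i ∈ I, Uc (i + 1)) * ∏ i ∈ Finset.range (n + 1) \ I, U (i + 1))
    rw [Mx, hIe]
    rw [Finset.mem_powersetCard] at hI
    refine le_trans (le_of_eq ?_) (Finset.le_sup (b := I.map (addRightEmbedding 1)) ?_)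
    · rw [range_sdiff_aux, Finset.prod_insert (by simp), Finset.prod_map, Finset.prod_map]
      simp only [addRightEmbedding_apply]
      ring
    · rw [Finset.mem_powersetCard, Finset.card_map]
      refine ⟨?_, hI.2⟩
      intro i hi
      simp only [Finset.mem_map, addRightEmbedding_apply] at hi
      obtain ⟨j, hj, rfl⟩ := hi
      have := Finset.mem_range.1 (hI.1 hj)
      exact Finset.mem_range.2 (by omega)

lemma Mx_step' (n : ℕ) (U Uc : ℕ → ℝ≥0∞) (a : ℕ) :
    Mx n (fun i => U (i + 1)) (fun i => Uc (i + 1)) a * Uc 0 ≤ Mx (n + 1) U Uc (a + 1) := by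
  rcases (Finset.powersetCard a (Finset.range (n + 1))).eq_empty_or_nonempty with h | h
  · simp [Mx, h]
  · obtain ⟨I, hI, hIe⟩ := Finset.exists_mem_eq_sup _ h
      (fun I => (∏ i ∈ I, Uc (i + 1)) * ∏ i ∈ Finset.range (n + 1) \ I, U (i + 1))
    rw [Mx, hIe]
    rw [Finset.mem_powersetCard] at hI
    refine le_trans (le_of_eq ?_)
      (Finset.le_sup (b := insert 0 (I.map (addRightEmbedding 1))) ?_)
    · rw [range_sdiff_aux', Finset.prod_insert (by simp), Finset.prod_map, Finset.prod_map]
      simp only [addRightEmbedding_apply]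
      ring
    · rw [Finset.mem_powersetCard, Finset.card_insert_of_notMem (by simp), Finset.card_map]
      refine ⟨?_, by rw [hI.2]⟩
      intro i hi
      simp only [Finset.mem_insert, Finset.mem_map, addRightEmbedding_apply] at hi
      rcases hi with rfl | ⟨j, hj, rfl⟩
      · simp
      · have := Finset.mem_range.1 (hI.1 hj)
        exact Finset.mem_range.2 (by omega)

lemma Mx_zero (n : ℕ) (U Uc : ℕ → ℝ≥0∞) : Mx n U Uc 0 = ∏ i ∈ Finset.range (n + 1), U i := by
  simp [Mx]

lemma core {X : Type*} [MeasurableSpace X] (Q : Kernel X X) [IsMarkovKernel Q]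
    (l : Measure X) [IsFiniteMeasure l] (C : Set X) (hC : MeasurableSet C)
    (e p : ℝ≥0∞) (he : e ≠ ⊤) (h1 : ∀ x ∈ C, e • l ≤ (Q x).restrict C)
    (h2 : ∀ x ∈ C, (Q x).restrict C ≤ p • l)
    (r κ : ℝ≥0∞) (hrκ : r + κ = 1) (hκ : κ * (p * p) ≤ e * e)
    (V : X → ℝ≥0∞) (hVm : Measurable V) (hV : ∀ x, 1 ≤ V x)
    (f : X → ℝ≥0∞) (hf : Measurable f) (hf1 : ∀ x, f x ≤ 1) (n : ℕ) :
    ∀ (gs : ℕ → X → ℝ≥0∞) (_ : ∀ i, Measurable (gs i)) (U Uc : ℕ → ℝ≥0∞)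
      (_ : ∀ i x, gs i x * ∫⁻ x', V x' ∂(Q x) ≤ U i * V x)
      (_ : ∀ i, ∀ x ∉ C, gs i x * ∫⁻ x', V x' ∂(Q x) ≤ Uc i * V x)
      (a t : ℕ) (x x' : X), 2 * a + t ≤ n + 2 → (x ∈ C → x' ∈ C → 2 * a + t ≤ n + 1) →
      bk Q f n gs x * bk Q (fun _ => 1) n gs x' ≤ bk Q f n gs x' * bk Q (fun _ => 1) n gs x +
        (r ^ t * (bk Q (fun _ => 1) n gs x * bk Q (fun _ => 1) n gs x') +
          ((∏ i ∈ Finset.range (n + 1), U i) * Mx n U Uc a) * (V x * V x')) := by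
  classical
  have triv0 : ∀ (n : ℕ) (gs : ℕ → X → ℝ≥0∞) (x x' : X) (B : ℝ≥0∞),
      bk Q f n gs x * bk Q (fun _ => 1) n gs x' ≤ bk Q f n gs x' * bk Q (fun _ => 1) n gs x +
        (r ^ 0 * (bk Q (fun _ => 1) n gs x * bk Q (fun _ => 1) n gs x') + B) := by
    intro n gs x x' B
    refine le_trans ?_ le_add_self
    refine le_trans ?_ le_self_add
    rw [pow_zero, one_mul]
    gcongr
    exact bk_mono Q _ _ hf1 n gs x
  have trivA : ∀ (n : ℕ) (gs : ℕ → X → ℝ≥0∞) (U Uc : ℕ → ℝ≥0∞)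
      (_ : ∀ i x, gs i x * ∫⁻ x', V x' ∂(Q x) ≤ U i * V x) (x x' : X) (B : ℝ≥0∞),
      bk Q f n gs x * bk Q (fun _ => 1) n gs x' ≤ bk Q f n gs x' * bk Q (fun _ => 1) n gs x +
        (B + ((∏ i ∈ Finset.range (n + 1), U i) * Mx n U Uc 0) * (V x * V x')) := by
    intro n gs U Uc hU x x' B
    refine le_trans ?_ le_add_self
    refine le_trans ?_ le_add_self
    rw [Mx_zero]
    calc _ ≤ bk Q (fun _ => 1) n gs x * bk Q (fun _ => 1) n gs x' := by
          gcongr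
          exact bk_mono Q _ _ hf1 n gs x
      _ ≤ ((∏ i ∈ Finset.range (n + 1), U i) * V x) *
          ((∏ i ∈ Finset.range (n + 1), U i) * V x') :=
          mul_le_mul' (bk_le Q V hVm hV n gs U hU x) (bk_le Q V hVm hV n gs U hU x')
      _ = _ := by ring
  induction n with
  | zero =>
    intro gs hgs U Uc hU hUc a t x x' hat hat'
    rcases Nat.eq_zero_or_pos t with rfl | ht
    · exact triv0 _ _ _ _ _
    · obtain rfl : a = 0 := by omega
      exact trivA _ _ _ _ hU _ _ _
  | succ n ih =>
    intro gs hgs U Uc hU hUc a t x x' hat hat'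
    rcases Nat.eq_zero_or_pos t with rfl | ht
    · exact triv0 _ _ _ _ _
    rcases Nat.eq_zero_or_pos a with rfl | ha
    · exact trivA _ _ _ _ hU _ _ _
    set gs' : ℕ → X → ℝ≥0∞ := fun i => gs (i + 1) with hgs'
    set U' : ℕ → ℝ≥0∞ := fun i => U (i + 1) with hU'
    set Uc' : ℕ → ℝ≥0∞ := fun i => Uc (i + 1) with hUc'
    have IH := ih gs' (fun i => hgs (i + 1)) U' Uc' (fun i => hU (i + 1)) (fun i => hUc (i + 1))
    set F := bk Q f n gs' with hF
    set G := bk Q (fun _ => 1) n gs' with hG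
    have hFm : Measurable F := measurable_bk Q f hf n _ (fun i => hgs (i + 1))
    have hGm : Measurable G := measurable_bk Q _ measurable_const n _ (fun i => hgs (i + 1))
    have bF : ∀ x, bk Q f (n + 1) gs x = gs 0 x * ∫⁻ w, F w ∂(Q x) := fun x => rfl
    have bG : ∀ x, bk Q (fun _ => 1) (n + 1) gs x = gs 0 x * ∫⁻ w, G w ∂(Q x) := fun x => rfl
    rw [bF, bF, bG, bG, Finset.prod_range_succ']
    set PU := ∏ i ∈ Finset.range (n + 1), U' i with hPU
    set P := (Q x).prod (Q x') with hP
    have iFG : ∫⁻ w, F w.1 * G w.2 ∂P = (∫⁻ w, F w ∂(Q x)) * ∫⁻ w, G w ∂(Q x') :=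
      lintegral_prod_mul hFm.aemeasurable hGm.aemeasurable
    have iGF : ∫⁻ w, F w.2 * G w.1 ∂P = (∫⁻ w, F w ∂(Q x')) * ∫⁻ w, G w ∂(Q x) := by
      rw [mul_comm, ← lintegral_prod_mul hGm.aemeasurable hFm.aemeasurable]
      exact lintegral_congr fun w => mul_comm _ _
    have iGG : ∫⁻ w, G w.1 * G w.2 ∂P = (∫⁻ w, G w ∂(Q x)) * ∫⁻ w, G w ∂(Q x') :=
      lintegral_prod_mul hGm.aemeasurable hGm.aemeasurable
    have iVV : ∫⁻ w, V w.1 * V w.2 ∂P = (∫⁻ w, V w ∂(Q x)) * ∫⁻ w, V w ∂(Q x') :=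
      lintegral_prod_mul hVm.aemeasurable hVm.aemeasurable
    have mGG : Measurable fun w : X × X => G w.1 * G w.2 :=
      (hGm.comp measurable_fst).mul (hGm.comp measurable_snd)
    have mFG : Measurable fun w : X × X => F w.1 * G w.2 :=
      (hFm.comp measurable_fst).mul (hGm.comp measurable_snd)
    have mVV : Measurable fun w : X × X => V w.1 * V w.2 :=
      (hVm.comp measurable_fst).mul (hVm.comp measurable_snd)
    have fin : ∀ T : ℝ≥0∞,
        ∫⁻ w, F w.1 * G w.2 ∂P ≤ ∫⁻ w, F w.2 * G w.1 ∂P +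
          ∫⁻ w, (r ^ t * (G w.1 * G w.2) + T * (V w.1 * V w.2)) ∂P →
        T * ((gs 0 x * ∫⁻ w, V w ∂(Q x)) * (gs 0 x' * ∫⁻ w, V w ∂(Q x'))) ≤
          ((PU * U 0) * Mx (n + 1) U Uc a) * (V x * V x') →
        (gs 0 x * ∫⁻ w, F w ∂(Q x)) * (gs 0 x' * ∫⁻ w, G w ∂(Q x')) ≤
          (gs 0 x' * ∫⁻ w, F w ∂(Q x')) * (gs 0 x * ∫⁻ w, G w ∂(Q x)) +
          (r ^ t * ((gs 0 x * ∫⁻ w, G w ∂(Q x)) * (gs 0 x' * ∫⁻ w, G w ∂(Q x'))) +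
          ((PU * U 0) * Mx (n + 1) U Uc a) * (V x * V x')) := by
      intro T hT1 hT2
      rw [lintegral_add_left (mGG.const_mul _), lintegral_const_mul _ mGG,
        lintegral_const_mul _ mVV, iFG, iGF, iGG, iVV] at hT1
      refine le_trans ?_ (add_le_add_right (add_le_add_right hT2 _) _)
      calc _ = (gs 0 x * gs 0 x') * ((∫⁻ w, F w ∂(Q x)) * ∫⁻ w, G w ∂(Q x')) := by ring
        _ ≤ (gs 0 x * gs 0 x') * _ := mul_le_mul_right hT1 _
        _ = _ := by ring
    by_cases hxC : x ∈ C ∧ x' ∈ C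
    · obtain ⟨hx, hx'⟩ := hxC
      have hat2 := hat' hx hx'
      refine fin (PU * Mx n U' Uc' a) ?_ ?_
      · have key := contr (Q x) (Q x') l C hC e p he (h1 x hx) (h1 x' hx') (h2 x hx) (h2 x' hx')
          r κ hrκ hκ (fun w => F w.1 * G w.2)
          (fun w => (if w ∈ C ×ˢ C then r ^ (t - 1) else r ^ t) * (G w.1 * G w.2) +
            (PU * Mx n U' Uc' a) * (V w.1 * V w.2)) mFG
          (((Measurable.ite (hC.prod hC) measurable_const measurable_const).mul mGG).add
            (mVV.const_mul _)) ?_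
        · refine key.trans ?_
          simp only [Prod.fst_swap, Prod.snd_swap]
          gcongr with w
          have hr1 : r ≤ 1 := by rw [← hrκ]; exact le_self_add
          split_ifs
          · rw [mul_add, ← mul_assoc, ← pow_succ', Nat.sub_add_cancel ht]
            exact add_le_add_right (mul_le_of_le_one_left' hr1) _
          · rw [one_mul]
        · rintro ⟨w, w'⟩
          simp only [Prod.fst_swap, Prod.snd_swap]
          split_ifs with hw
          · exact IH a (t - 1) w w' (by omega) (fun _ _ => by omega)
          · refine IH a t w w' (by omega) (fun h h' => absurd (Set.mk_mem_prod h h') hw)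
      · calc _ ≤ PU * Mx n U' Uc' a * ((U 0 * V x) * (U 0 * V x')) := by
              exact mul_le_mul_right (mul_le_mul' (hU 0 x) (hU 0 x')) _
          _ = (PU * U 0) * (Mx n U' Uc' a * U 0) * (V x * V x') := by ring
          _ ≤ _ := by
              gcongr
              exact Mx_step n U Uc a
    · obtain ⟨b, rfl⟩ : ∃ b, a = b + 1 := ⟨a - 1, by omega⟩
      refine fin (PU * Mx n U' Uc' b) ?_ ?_
      · rw [← lintegral_add_left (by fun_prop)]
        refine lintegral_mono fun w => ?_
        exact IH b t w.1 w.2 (by omega) (fun _ _ => by omega)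
      · have hst : PU * Mx n U' Uc' b * (U 0 * Uc 0) * (V x * V x') ≤
            ((PU * U 0) * Mx (n + 1) U Uc (b + 1)) * (V x * V x') := by
          calc _ = (PU * U 0) * (Mx n U' Uc' b * Uc 0) * (V x * V x') := by ring
            _ ≤ _ := by
              gcongr
              exact Mx_step' n U Uc b
        refine le_trans ?_ hst
        by_cases hx : x ∈ C
        · have hx' : x' ∉ C := fun h => hxC ⟨hx, h⟩
          calc _ ≤ PU * Mx n U' Uc' b * ((U 0 * V x) * (Uc 0 * V x')) := by
                exact mul_le_mul_right (mul_le_mul' (hU 0 x) (hUc 0 x' hx')) _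
            _ = _ := by ring
        · calc _ ≤ PU * Mx n U' Uc' b * ((Uc 0 * V x) * (U 0 * V x')) := by
                exact mul_le_mul_right (mul_le_mul' (hUc 0 x hx) (hU 0 x')) _
            _ = _ := by ring

lemma filtSeq_shift {X Y : Type*} [MeasurableSpace X] (Q : Kernel X X)
    (g : X → Y → ℝ) (μ : Measure X) (y : ℕ → Y) (n : ℕ) :
    filtSeq Q g μ y (n + 1) =
      filtSeq Q g ((μ.withDensity (fun x => ENNReal.ofReal (g x (y 0)))).bind (fun x => Q x))
        (fun i => y (i + 1)) n := by
  induction n with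
  | zero => rfl
  | succ n ih =>
    rw [filtSeq, ih]
    rfl

lemma lintegral_filtSeq {X Y : Type*} [MeasurableSpace X] (Q : Kernel X X)
    (g : X → Y → ℝ) (hg : ∀ y, Measurable fun x => g x y) (f : X → ℝ≥0∞) (hf : Measurable f)
    (n : ℕ) : ∀ (μ : Measure X) (y : ℕ → Y),
    ∫⁻ x, f x ∂(filtSeq Q g μ y n) =
      ∫⁻ x, bk Q f n (fun i x => ENNReal.ofReal (g x (y i))) x ∂μ := by
  induction n with
  | zero =>
    intro μ y
    rw [filtSeq, lintegral_withDensity_eq_lintegral_mul _ (hg _).ennreal_ofReal hf]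
    rfl
  | succ n ih =>
    intro μ y
    have hm := measurable_bk Q f hf n (fun i x => ENNReal.ofReal (g x (y (i + 1))))
      (fun i => (hg _).ennreal_ofReal)
    rw [filtSeq_shift, ih, Measure.lintegral_bind Q.measurable.aemeasurable hm.aemeasurable,
      lintegral_withDensity_eq_lintegral_mul _ (hg _).ennreal_ofReal hm.lintegral_kernel]
    rfl

lemma filtSeq_lower {X Y : Type*} [MeasurableSpace X] (Q : Kernel X X)
    (g : X → Y → ℝ) (hg : ∀ y, Measurable fun x => g x y)
    (D : Set X) (l : Measure X) (hD : MeasurableSet D) (e : ℝ≥0∞)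
    (h1 : ∀ x ∈ D, e • l.restrict D ≤ (Q x).restrict D)
    (μ : Measure X) (y : ℕ → Y) (n : ℕ) :
    e ^ n * Phi Q g μ D (y 0) (y 1) * ∏ i ∈ Finset.Icc 2 (n + 1), Psi g l D (y i) ≤
      filtSeq Q g μ y (n + 1) D := by
  have step : ∀ k, filtSeq Q g μ y (k + 1) D =
      ∫⁻ x, ∫⁻ x' in D, ENNReal.ofReal (g x' (y (k + 1))) ∂(Q x) ∂(filtSeq Q g μ y k) := by
    intro k
    have hm : Measurable (D.indicator fun x' => ENNReal.ofReal (g x' (y (k + 1)))) :=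
      (hg _).ennreal_ofReal.indicator hD
    rw [filtSeq, withDensity_apply _ hD, ← lintegral_indicator hD,
      Measure.lintegral_bind Q.measurable.aemeasurable hm.aemeasurable]
    simp_rw [lintegral_indicator hD]
  have mS : ∀ y', Measurable fun x => ∫⁻ x' in D, ENNReal.ofReal (g x' y') ∂(Q x) := by
    intro y'
    simp_rw [← lintegral_indicator hD]
    exact ((hg _).ennreal_ofReal.indicator hD).lintegral_kernel
  induction n with
  | zero =>
    rw [step 0, filtSeq, lintegral_withDensity_eq_lintegral_mul _ (hg _).ennreal_ofReal (mS _)]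
    simp [Phi]
  | succ n ih =>
    rw [step (n + 1)]
    calc _ = (e * Psi g l D (y (n + 2))) * (e ^ n * Phi Q g μ D (y 0) (y 1) *
          ∏ i ∈ Finset.Icc 2 (n + 1), Psi g l D (y i)) := by
          rw [Finset.prod_Icc_succ_top (by omega)]; ring
      _ ≤ (e * Psi g l D (y (n + 2))) * filtSeq Q g μ y (n + 1) D := by gcongr
      _ = ∫⁻ x in D, (e * Psi g l D (y (n + 2))) ∂(filtSeq Q g μ y (n + 1)) := by simp
      _ ≤ ∫⁻ x in D, ∫⁻ x' in D, ENNReal.ofReal (g x' (y (n + 2))) ∂(Q x)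
            ∂(filtSeq Q g μ y (n + 1)) := by
          refine setLIntegral_mono (mS _) fun x hx => ?_
          rw [Psi, ← smul_eq_mul, ← lintegral_smul_measure]
          exact lintegral_mono' (h1 x hx) le_rfl
      _ ≤ _ := setLIntegral_le_lintegral _ _

lemma oneSided {X Y : Type*} [MeasurableSpace X] (Q : Kernel X X) [IsMarkovKernel Q]
    (l : Measure X) [IsFiniteMeasure l] (C : Set X) (hC : MeasurableSet C)
    (e p : ℝ≥0∞) (he : e ≠ ⊤) (h1 : ∀ x ∈ C, e • l ≤ (Q x).restrict C)
    (h2 : ∀ x ∈ C, (Q x).restrict C ≤ p • l)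
    (r κ : ℝ≥0∞) (hrκ : r + κ = 1) (hκ : κ * (p * p) ≤ e * e)
    (V : X → ℝ≥0∞) (hVm : Measurable V) (hV : ∀ x, 1 ≤ V x)
    (g : X → Y → ℝ) (hg : ∀ y, Measurable fun x => g x y) (y : ℕ → Y) (U Uc : ℕ → ℝ≥0∞)
    (hU : ∀ i x, ENNReal.ofReal (g x (y i)) * ∫⁻ x', V x' ∂(Q x) ≤ U i * V x)
    (hUc : ∀ i, ∀ x ∉ C, ENNReal.ofReal (g x (y i)) * ∫⁻ x', V x' ∂(Q x) ≤ Uc i * V x)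
    (n a t : ℕ) (hat : 2 * a + t ≤ n + 1)
    (μ μ' : Measure X) [IsProbabilityMeasure μ] [IsProbabilityMeasure μ']
    (A : Set X) (hA : MeasurableSet A)
    (hZ : 0 < filtSeq Q g μ y n Set.univ ∧ filtSeq Q g μ y n Set.univ ≠ ⊤)
    (hZ' : 0 < filtSeq Q g μ' y n Set.univ ∧ filtSeq Q g μ' y n Set.univ ≠ ⊤) :
    filt Q g μ y n A ≤ filt Q g μ' y n A + (r ^ t +
      ((∏ i ∈ Finset.range (n + 1), U i) * Mx n U Uc a *
        ((∫⁻ x, V x ∂μ) * ∫⁻ x, V x ∂μ')) /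
        (filtSeq Q g μ y n Set.univ * filtSeq Q g μ' y n Set.univ)) := by
  set gs : ℕ → X → ℝ≥0∞ := fun i x => ENNReal.ofReal (g x (y i)) with hgs
  have hgm : ∀ i, Measurable (gs i) := fun i => (hg _).ennreal_ofReal
  have mf : Measurable (A.indicator (fun _ => (1 : ℝ≥0∞))) := measurable_const.indicator hA
  have key := core Q l C hC e p he h1 h2 r κ hrκ hκ V hVm hV
    (A.indicator (fun _ => 1)) mf (fun x => Set.indicator_le_self' (by simp) x) n gs hgm
    U Uc hU hUc a t
  set F := bk Q (A.indicator (fun _ => (1 : ℝ≥0∞))) n gs with hF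
  set G := bk Q (fun _ => 1) n gs with hG
  have hFm : Measurable F := measurable_bk Q _ mf n _ hgm
  have hGm : Measurable G := measurable_bk Q _ measurable_const n _ hgm
  have iF : ∀ m : Measure X, ∫⁻ x, F x ∂m = filtSeq Q g m y n A := by
    intro m
    rw [hF, hgs, ← lintegral_filtSeq Q g hg _ mf n m y, lintegral_indicator hA]
    simp
  have iG : ∀ m : Measure X, ∫⁻ x, G x ∂m = filtSeq Q g m y n Set.univ := by
    intro m
    rw [hG, hgs, ← lintegral_filtSeq Q g hg _ measurable_const n m y]
    simp
  have mGG : Measurable fun w : X × X => G w.1 * G w.2 :=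
    (hGm.comp measurable_fst).mul (hGm.comp measurable_snd)
  have mVV : Measurable fun w : X × X => V w.1 * V w.2 :=
    (hVm.comp measurable_fst).mul (hVm.comp measurable_snd)
  have mGF : Measurable fun w : X × X => G w.1 * F w.2 :=
    (hGm.comp measurable_fst).mul (hFm.comp measurable_snd)
  have big : ∫⁻ w, F w.1 * G w.2 ∂(μ.prod μ') ≤ ∫⁻ w, (G w.1 * F w.2 +
      (r ^ t * (G w.1 * G w.2) + ((∏ i ∈ Finset.range (n + 1), U i) * Mx n U Uc a) *
        (V w.1 * V w.2))) ∂(μ.prod μ') := by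
    refine lintegral_mono fun w => ?_
    have := key w.1 w.2 (by omega) (fun _ _ => hat)
    rwa [mul_comm (F w.2)] at this
  rw [lintegral_add_left mGF, lintegral_add_left (mGG.const_mul _), lintegral_const_mul _ mGG,
    lintegral_const_mul _ mVV, lintegral_prod_mul hFm.aemeasurable hGm.aemeasurable,
    lintegral_prod_mul hGm.aemeasurable hFm.aemeasurable,
    lintegral_prod_mul hGm.aemeasurable hGm.aemeasurable,
    lintegral_prod_mul hVm.aemeasurable hVm.aemeasurable, iF, iF, iG, iG] at big
  simp only [filt, Measure.smul_apply, smul_eq_mul]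
  generalize filtSeq Q g μ y n Set.univ = Z at *
  generalize filtSeq Q g μ' y n Set.univ = Z' at *
  generalize filtSeq Q g μ y n A = ZA at *
  generalize filtSeq Q g μ' y n A = ZA' at *
  generalize (∏ i ∈ Finset.range (n + 1), U i) * Mx n U Uc a *
        ((∫⁻ x, V x ∂μ) * ∫⁻ x, V x ∂μ') = N at *
  have c1 : Z * Z⁻¹ = 1 := ENNReal.mul_inv_cancel hZ.1.ne' hZ.2
  have c2 : Z' * Z'⁻¹ = 1 := ENNReal.mul_inv_cancel hZ'.1.ne' hZ'.2
  have c3 : (Z * Z')⁻¹ = Z⁻¹ * Z'⁻¹ := ENNReal.mul_inv (Or.inl hZ.1.ne') (Or.inl hZ.2)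
  rw [div_eq_mul_inv, c3]
  calc Z⁻¹ * ZA = (ZA * Z') * (Z⁻¹ * Z'⁻¹) := by
        rw [show (ZA * Z') * (Z⁻¹ * Z'⁻¹) = Z⁻¹ * ZA * (Z' * Z'⁻¹) by ring, c2, mul_one]
    _ ≤ (Z * ZA' + (r ^ t * (Z * Z') + N)) * (Z⁻¹ * Z'⁻¹) := mul_le_mul_left big _
    _ = Z'⁻¹ * ZA' * (Z * Z⁻¹) + (r ^ t * ((Z * Z⁻¹) * (Z' * Z'⁻¹)) + N * (Z⁻¹ * Z'⁻¹)) := by ring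
    _ = _ := by rw [c1, c2, mul_one, mul_one, mul_one]

lemma ld_lower {X : Type*} [MeasurableSpace X] {Q : Kernel X X} {C : Set X} {lam : Measure X}
    {em ep : ℝ} (h : IsLDSet Q C lam em ep) :
    (∀ x ∈ C, ENNReal.ofReal em • lam.restrict C ≤ (Q x).restrict C) ∧
      ∀ x ∈ C, (Q x).restrict C ≤ ENNReal.ofReal ep • lam.restrict C := by
  obtain ⟨hC, h0, hem, hep, hle⟩ := h
  refine ⟨fun x hx => Measure.le_iff.2 fun A hA => ?_, fun x hx => Measure.le_iff.2 fun A hA => ?_⟩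
  · simpa [Measure.restrict_apply hA] using (hle x hx A hA).1
  · simpa [Measure.restrict_apply hA] using (hle x hx A hA).2

lemma ld_fin {X : Type*} [MeasurableSpace X] {Q : Kernel X X} [IsMarkovKernel Q]
    {C : Set X} {lam : Measure X}
    {em ep : ℝ} (h : IsLDSet Q C lam em ep) : lam C ≠ ⊤ ∧ em ≤ ep := by
  obtain ⟨hC, h0, hem, hep, hle⟩ := h
  obtain ⟨x, hx⟩ : C.Nonempty := by
    by_contra hne
    rw [Set.not_nonempty_iff_eq_empty] at hne
    simp [hne] at h0
  have h3 := hle x hx Set.univ MeasurableSet.univ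
  rw [Set.univ_inter] at h3
  have hfin : lam C ≠ ⊤ := by
    intro htop
    rw [htop, ENNReal.mul_top (by simpa using hem)] at h3
    exact measure_ne_top (Q x) C (top_le_iff.1 h3.1)
  refine ⟨hfin, ?_⟩
  have h4 := h3.1.trans h3.2
  rw [ENNReal.mul_le_mul_iff_left h0.ne' hfin] at h4
  exact (ENNReal.ofReal_le_ofReal_iff hep.le).1 h4

end HMMAux


/-- Lemma 3 of the paper: for `β ∈ (0,1)`, LD-sets `C`, `D`, initial
distributions `ν, ν'`, a function `V : X → [1,∞)`, and observations `y_{0:n}` for which both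
filtering distributions are well defined,
`‖φ_{ν,n} − φ_{ν',n}‖_TV ≤ ρ_C^{βn} + [∏_{i≤n} Υ_X(y_i) · max_{|I|=aₙ} ∏_{i∈I} Υ_{C^c}(y_i)
∏_{i∉I} Υ_X(y_i)] ν(V) ν'(V) / [(ε⁻_D)^{2(n−1)} Φ_{ν,D}(y₀,y₁) Φ_{ν',D}(y₀,y₁)
∏_{i=2}^n Ψ_D(y_i)²]` with `aₙ = ⌊n(1−β)/2⌋`. -/
theorem forgetting_hmm_stmt4 {X Y : Type*} [MeasurableSpace X] [MeasurableSpace Y]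
    (Q : Kernel X X) [IsMarkovKernel Q]
    (g : X → Y → ℝ) (hgmeas : Measurable (Function.uncurry g)) (hgnn : ∀ x y, 0 ≤ g x y)
    (β : ℝ) (hβ : β ∈ Set.Ioo (0 : ℝ) 1)
    (C : Set X) (lamC : Measure X) (emC epC : ℝ) (hC : IsLDSet Q C lamC emC epC)
    (D : Set X) (lamD : Measure X) (emD epD : ℝ) (hD : IsLDSet Q D lamD emD epD)
    (ν ν' : Measure X) [IsProbabilityMeasure ν] [IsProbabilityMeasure ν']
    (V : X → ℝ) (hVmeas : Measurable V) (hV1 : ∀ x, 1 ≤ V x)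
    (n : ℕ) (hn : 1 ≤ n) (y : ℕ → Y)
    -- both filtering distributions are well defined
    (hwdν : 0 < filtSeq Q g ν y n Set.univ ∧ filtSeq Q g ν y n Set.univ ≠ ⊤)
    (hwdν' : 0 < filtSeq Q g ν' y n Set.univ ∧ filtSeq Q g ν' y n Set.univ ≠ ⊤) :
    ENNReal.ofReal (tvDist (filt Q g ν y n) (filt Q g ν' y n))
      ≤ ENNReal.ofReal ((1 - (emC / epC) ^ 2) ^ (β * n))
        + ((∏ i ∈ Finset.range (n + 1), Ups Q g V Set.univ (y i)) *
            ((Finset.powersetCard (Nat.floor ((n : ℝ) * (1 - β) / 2))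
                (Finset.range (n + 1))).sup
              (fun I => (∏ i ∈ I, Ups Q g V Cᶜ (y i)) *
                ∏ i ∈ Finset.range (n + 1) \ I, Ups Q g V Set.univ (y i))) *
            ((∫⁻ x, ENNReal.ofReal (V x) ∂ν) * ∫⁻ x, ENNReal.ofReal (V x) ∂ν'))
          / (ENNReal.ofReal emD ^ (2 * (n - 1)) *
              Phi Q g ν D (y 0) (y 1) * Phi Q g ν' D (y 0) (y 1) *
              ∏ i ∈ Finset.Icc 2 n, (Psi g lamD D (y i)) ^ 2) := by
  have hg : ∀ y, Measurable fun x => g x y := fun y =>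
    hgmeas.comp (measurable_id.prodMk measurable_const)
  obtain ⟨hlo, hhi⟩ := HMMAux.ld_lower hC
  obtain ⟨hlfin, hee⟩ := HMMAux.ld_fin hC
  obtain ⟨hCm, -, hemC, hepC, -⟩ := hC
  obtain ⟨hloD, -⟩ := HMMAux.ld_lower hD
  obtain ⟨hDm, -, -, -, -⟩ := hD
  have : IsFiniteMeasure (lamC.restrict C) := ⟨by simpa using hlfin.lt_top⟩
  have hq0 : 0 < emC / epC := div_pos hemC hepC
  have hq1 : emC / epC ≤ 1 := (div_le_one hepC).2 hee
  have hqq : (emC / epC) ^ 2 ≤ 1 := pow_le_one₀ hq0.le hq1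
  set ρ : ℝ := 1 - (emC / epC) ^ 2 with hρ
  have hρ0 : 0 ≤ ρ := by rw [hρ]; linarith
  have hρ1 : ρ ≤ 1 := by rw [hρ]; nlinarith [sq_nonneg (emC / epC)]
  have hrκ : ENNReal.ofReal ρ + ENNReal.ofReal ((emC / epC) ^ 2) = 1 := by
    rw [← ENNReal.ofReal_add hρ0 (by positivity), hρ, sub_add_cancel, ENNReal.ofReal_one]
  have hκ : ENNReal.ofReal ((emC / epC) ^ 2) * (ENNReal.ofReal epC * ENNReal.ofReal epC) ≤
      ENNReal.ofReal emC * ENNReal.ofReal emC := by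
    rw [← ENNReal.ofReal_mul hepC.le, ← ENNReal.ofReal_mul hemC.le,
      ← ENNReal.ofReal_mul (by positivity)]
    apply ENNReal.ofReal_le_ofReal
    apply le_of_eq
    field_simp
  set a := Nat.floor ((n : ℝ) * (1 - β) / 2) with ha
  set t := Nat.ceil (β * n) with ht
  have hβn : 0 ≤ β * n := mul_nonneg hβ.1.le (Nat.cast_nonneg n)
  have hat : 2 * a + t ≤ n + 1 := by
    have e1 : (a : ℝ) ≤ (n : ℝ) * (1 - β) / 2 :=
      Nat.floor_le (div_nonneg (mul_nonneg (Nat.cast_nonneg n) (by linarith [hβ.2])) (by norm_num))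
    have e2 : (t : ℝ) < β * n + 1 := Nat.ceil_lt_add_one hβn
    have e3 : ((2 * a + t : ℕ) : ℝ) < ((n + 1 : ℕ) : ℝ) := by
      push_cast
      linarith
    exact (Nat.cast_lt.1 e3).le
  have hpow : ENNReal.ofReal ρ ^ t ≤ ENNReal.ofReal (ρ ^ (β * n)) := by
    rw [← ENNReal.ofReal_pow hρ0]
    apply ENNReal.ofReal_le_ofReal
    rw [← Real.rpow_natCast]
    exact Real.rpow_le_rpow_of_exponent_ge' hρ0 hρ1 hβn (Nat.le_ceil _)
  have hVpos : ∀ x, ENNReal.ofReal (V x) ≠ 0 := fun x => by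
    have := hV1 x
    simp only [ne_eq, ENNReal.ofReal_eq_zero, not_le]
    linarith
  have hUps : ∀ (A : Set X) (i : ℕ), ∀ x ∈ A, ENNReal.ofReal (g x (y i)) *
      ∫⁻ x', ENNReal.ofReal (V x') ∂(Q x) ≤ Ups Q g V A (y i) * ENNReal.ofReal (V x) := by
    intro A i x hx
    rw [← ENNReal.div_le_iff (hVpos x) ENNReal.ofReal_ne_top]
    exact le_iSup₂ (f := fun x (_ : x ∈ A) =>
      ENNReal.ofReal (g x (y i)) * kernelV Q V x / ENNReal.ofReal (V x)) x hx
  have hden : ∀ μ : Measure X, ENNReal.ofReal emD ^ (n - 1) * Phi Q g μ D (y 0) (y 1) *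
      ∏ i ∈ Finset.Icc 2 n, Psi g lamD D (y i) ≤ filtSeq Q g μ y n Set.univ := by
    intro μ
    have := HMMAux.filtSeq_lower Q g hg D lamD hDm (ENNReal.ofReal emD) hloD μ y (n - 1)
    rw [Nat.sub_add_cancel hn] at this
    exact this.trans (measure_mono (Set.subset_univ _))
  set Den := ENNReal.ofReal emD ^ (2 * (n - 1)) *
              Phi Q g ν D (y 0) (y 1) * Phi Q g ν' D (y 0) (y 1) *
              ∏ i ∈ Finset.Icc 2 n, (Psi g lamD D (y i)) ^ 2 with hDen
  have hDenle : Den ≤ filtSeq Q g ν y n Set.univ * filtSeq Q g ν' y n Set.univ := by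
    refine le_trans (le_of_eq ?_) (mul_le_mul' (hden ν) (hden ν'))
    rw [hDen, Finset.prod_pow, pow_mul']
    ring
  have one := fun (μ μ' : Measure X) [IsProbabilityMeasure μ] [IsProbabilityMeasure μ'] =>
    HMMAux.oneSided Q (lamC.restrict C) C hCm _ _ ENNReal.ofReal_ne_top hlo hhi _ _ hrκ hκ
      (fun x => ENNReal.ofReal (V x)) hVmeas.ennreal_ofReal
      (fun x => by simpa using ENNReal.ofReal_le_ofReal (hV1 x)) g hg y
      (fun i => Ups Q g V Set.univ (y i)) (fun i => Ups Q g V Cᶜ (y i))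
      (fun i x => hUps Set.univ i x (Set.mem_univ x)) (fun i x hx => hUps Cᶜ i x hx)
      n a t hat μ μ'
  set Num := (∏ i ∈ Finset.range (n + 1), Ups Q g V Set.univ (y i)) *
            ((Finset.powersetCard a (Finset.range (n + 1))).sup
              (fun I => (∏ i ∈ I, Ups Q g V Cᶜ (y i)) *
                ∏ i ∈ Finset.range (n + 1) \ I, Ups Q g V Set.univ (y i))) *
            ((∫⁻ x, ENNReal.ofReal (V x) ∂ν) * ∫⁻ x, ENNReal.ofReal (V x) ∂ν') with hNum
  set B := ENNReal.ofReal (ρ ^ (β * n)) + Num / Den with hB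
  have hAB : ∀ A, MeasurableSet A → filt Q g ν y n A ≤ filt Q g ν' y n A + B := by
    intro A hA
    refine (one ν ν' A hA hwdν hwdν').trans ?_
    exact add_le_add_right (add_le_add hpow (ENNReal.div_le_div_left hDenle Num)) _
  have hAB' : ∀ A, MeasurableSet A → filt Q g ν' y n A ≤ filt Q g ν y n A + B := by
    intro A hA
    refine (one ν' ν A hA hwdν' hwdν).trans ?_
    rw [mul_comm (filtSeq Q g ν' y n Set.univ), mul_comm (lintegral ν' _)]
    exact add_le_add_right (add_le_add hpow (ENNReal.div_le_div_left hDenle Num)) _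
  by_cases hBtop : B = ⊤
  · rw [hBtop]; exact le_top
  have hfinite : ∀ (μ : Measure X), (0 < filtSeq Q g μ y n Set.univ ∧
      filtSeq Q g μ y n Set.univ ≠ ⊤) → ∀ A, filt Q g μ y n A ≠ ⊤ := by
    intro μ hμ A
    rw [filt, Measure.smul_apply, smul_eq_mul]
    exact ENNReal.mul_ne_top (ENNReal.inv_ne_top.2 hμ.1.ne')
      (ne_top_of_le_ne_top hμ.2 (measure_mono (Set.subset_univ _)))
  rw [ENNReal.ofReal_le_iff_le_toReal hBtop, tvDist]
  have : Nonempty {S : Set X // MeasurableSet S} := ⟨⟨∅, MeasurableSet.empty⟩⟩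
  refine ciSup_le fun A => ?_
  have f1 := hfinite ν hwdν A.1
  have f2 := hfinite ν' hwdν' A.1
  have t1 := ENNReal.toReal_mono (ENNReal.add_ne_top.2 ⟨f2, hBtop⟩) (hAB A.1 A.2)
  have t2 := ENNReal.toReal_mono (ENNReal.add_ne_top.2 ⟨f1, hBtop⟩) (hAB' A.1 A.2)
  rw [ENNReal.toReal_add f2 hBtop] at t1
  rw [ENNReal.toReal_add f1 hBtop] at t2
  rw [abs_sub_le_iff]
  constructor <;> linarith
end

section
/- Assume (H2). Let D be an LD-set for Q and let γ, β be constants with γ ∈ (0,1) and β ∈ (0,γ). Then for any η ∈ (0,1) there exists an LD-set C such that, for any sequence y_{0:n} ∈ Y^{n+1} satisfying Σ_{i=0}^n 1_K(y_i) ≥ (1+γ)n/2, any initial probability measures ν and ν' for which the filtering distributions are well defined, and any n ≥ 1, ‖φ_{ν,n}[y_{0:n}] − φ_{ν',n}[y_{0:n}]‖_TV ≤ ρ_C^{βn} + η^{(γ−β)n/2} · ∏_{i=0}^n Υ_X(y_i)² / [ (ε⁻_D)^{2(n−1)} · Φ_{ν,D}(y₀,y₁) · Φ_{ν',D}(y₀,y₁)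 · ∏_{i=2}^n Ψ_D(y_i)² ] · ν(V)·ν'(V). -/
open MeasureTheory ProbabilityTheory Filter
open scoped ENNReal

section aux

variable {X : Type*} [MeasurableSpace X]

/-- Contraction on a single measure by removing a common part. -/
lemma aux_contract {Z : Type*} [MeasurableSpace Z] (μ L : Measure Z) [IsFiniteMeasure μ]
    (hL : L ≤ μ) (r r' : ℝ≥0∞) (hr : r + r' = 1) (hrL : r' • μ ≤ L)
    (u v w : Z → ℝ≥0∞) (hv : Measurable v) (huv : ∀ z, u z ≤ v z + w z)
    (huvL : ∫⁻ z, u z ∂L = ∫⁻ z, v z ∂L) :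
    ∫⁻ z, u z ∂μ ≤ ∫⁻ z, v z ∂μ + r * ∫⁻ z, w z ∂μ := by
  have hLf : IsFiniteMeasure L := isFiniteMeasure_of_le μ hL
  have hdec : μ - L + L = μ := Measure.sub_add_cancel_of_le hL
  have hR : μ - L ≤ r • μ := by
    rw [Measure.le_iff]
    intro s hs
    rw [Measure.sub_apply hs hL, Measure.smul_apply, smul_eq_mul, tsub_le_iff_right]
    calc μ s = r * μ s + r' * μ s := by rw [← add_mul, hr, one_mul]
      _ ≤ r * μ s + L s := by
        gcongr
        exact hrL s
  calc ∫⁻ z, u z ∂μ = ∫⁻ z, u z ∂(μ - L) + ∫⁻ z, u z ∂L := by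
        rw [← lintegral_add_measure, hdec]
    _ ≤ (∫⁻ z, v z ∂(μ - L) + ∫⁻ z, w z ∂(μ - L)) + ∫⁻ z, v z ∂L := by
        rw [huvL]
        gcongr
        rw [← lintegral_add_left hv]
        exact lintegral_mono huv
    _ = ∫⁻ z, v z ∂μ + ∫⁻ z, w z ∂(μ - L) := by
        conv_rhs => rw [← hdec, lintegral_add_measure, hdec]
        ring
    _ ≤ ∫⁻ z, v z ∂μ + r * ∫⁻ z, w z ∂μ := by
        gcongr
        calc ∫⁻ z, w z ∂(μ - L) ≤ ∫⁻ z, w z ∂(r • μ) := lintegral_mono' hR le_rfl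
          _ = _ := by rw [lintegral_smul_measure, smul_eq_mul]

/-- Unnormalised two-copy recursion. -/
noncomputable def auxH (Q : Kernel X X) :
    ℕ → (ℕ → X → ℝ≥0∞) → (X × X → ℝ≥0∞) → X × X → ℝ≥0∞
  | 0, G, f => fun p => G 0 p.1 * G 0 p.2 * f p
  | m + 1, G, f => fun p =>
      G 0 p.1 * G 0 p.2 * ∫⁻ z, auxH Q m (fun i => G (i + 1)) f z ∂((Q ∥ₖ Q) p)

open Classical in
/-- Two-copy recursion with a discount for consecutive visits to `C × C`. -/
noncomputable def auxW (Q : Kernel X X) (C : Set X) (r : ℝ≥0∞) :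
    ℕ → (ℕ → X → ℝ≥0∞) → X × X → ℝ≥0∞
  | 0, G => fun p => G 0 p.1 * G 0 p.2
  | m + 1, G => fun p =>
      G 0 p.1 * G 0 p.2 * ∫⁻ z, (if p ∈ C ×ˢ C ∧ z ∈ C ×ˢ C then r else 1) *
        auxW Q C r m (fun i => G (i + 1)) z ∂((Q ∥ₖ Q) p)

lemma auxH_meas (Q : Kernel X X) [IsMarkovKernel Q] (m : ℕ) :
    ∀ (G : ℕ → X → ℝ≥0∞) (_ : ∀ i, Measurable (G i)) (f : X × X → ℝ≥0∞) (_ : Measurable f),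
      Measurable (auxH Q m G f) := by
  induction m with
  | zero =>
    intro G hG f hf
    have := hG 0
    simp only [auxH]
    fun_prop
  | succ m ih =>
    intro G hG f hf
    have h0 := hG 0
    have := (ih _ (fun i => hG (i + 1)) f hf).lintegral_kernel (κ := Q ∥ₖ Q)
    simp only [auxH]
    fun_prop

lemma auxW_meas (Q : Kernel X X) [IsMarkovKernel Q] (C : Set X) (hC : MeasurableSet C)
    (r : ℝ≥0∞) (m : ℕ) :
    ∀ (G : ℕ → X → ℝ≥0∞) (_ : ∀ i, Measurable (G i)), Measurable (auxW Q C r m G) := by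
  classical
  induction m with
  | zero =>
    intro G hG
    have := hG 0
    simp only [auxW]
    fun_prop
  | succ m ih =>
    intro G hG
    have h0 := hG 0
    have h1 := ih _ (fun i => hG (i + 1))
    have hS : MeasurableSet {q : (X × X) × (X × X) | q.1 ∈ C ×ˢ C ∧ q.2 ∈ C ×ˢ C} :=
      (hC.prod hC).prod (hC.prod hC)
    have h2 : Measurable (Function.uncurry (fun p z : X × X =>
        (if p ∈ C ×ˢ C ∧ z ∈ C ×ˢ C then r else 1) * auxW Q C r m (fun i => G (i + 1)) z)) := by
      refine Measurable.mul ?_ (h1.comp measurable_snd)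
      exact Measurable.ite hS measurable_const measurable_const
    have := h2.lintegral_kernel_prod_right (κ := Q ∥ₖ Q)
    simp only [auxW]
    fun_prop

lemma auxH_swap (Q : Kernel X X) [IsMarkovKernel Q] (m : ℕ) :
    ∀ (G : ℕ → X → ℝ≥0∞) (f : X × X → ℝ≥0∞) (p : X × X),
      auxH Q m G (fun z => f z.swap) p = auxH Q m G f p.swap := by
  induction m with
  | zero =>
    intro G f p
    simp only [auxH, Prod.fst_swap, Prod.snd_swap]
    ring
  | succ m ih =>
    intro G f p
    simp only [auxH, Prod.fst_swap, Prod.snd_swap, ih]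
    rw [mul_comm (G 0 p.1)]
    congr 1
    obtain ⟨a, b⟩ := p
    simp only [Prod.swap, Kernel.parallelComp_apply]
    exact lintegral_prod_swap (μ := Q b) (ν := Q a) (auxH Q m (fun i => G (i + 1)) f)

/-- Local Doeblin comparison on the product. -/
lemma aux_LD (Q : Kernel X X) [IsMarkovKernel Q] (C : Set X) (lam : Measure X) (em ep : ℝ)
    (hLD : IsLDSet Q C lam em ep) (x : X) (hx : x ∈ C) :
    ENNReal.ofReal em • lam.restrict C ≤ (Q x).restrict C ∧
      ENNReal.ofReal (em / ep) • (Q x).restrict C ≤ ENNReal.ofReal em • lam.restrict C := by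
  obtain ⟨hC, -, hem, hep, h⟩ := hLD
  constructor
  · rw [Measure.le_iff]
    intro s hs
    simpa [Measure.restrict_apply hs] using (h x hx s hs).1
  · rw [Measure.le_iff]
    intro s hs
    simp only [Measure.smul_apply, Measure.restrict_apply hs, smul_eq_mul]
    calc ENNReal.ofReal (em / ep) * Q x (s ∩ C)
        ≤ ENNReal.ofReal (em / ep) * (ENNReal.ofReal ep * lam (s ∩ C)) := by
          gcongr
          exact (h x hx s hs).2
      _ = ENNReal.ofReal em * lam (s ∩ C) := by
          rw [← mul_assoc, ← ENNReal.ofReal_mul (by positivity), div_mul_cancel₀ _ hep.ne']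

lemma aux_LD_finite (Q : Kernel X X) [IsMarkovKernel Q] (C : Set X) (lam : Measure X)
    (em ep : ℝ) (hLD : IsLDSet Q C lam em ep) (x : X) (hx : x ∈ C) :
    IsFiniteMeasure (lam.restrict C) := by
  constructor
  have h1 := (aux_LD Q C lam em ep hLD x hx).1 Set.univ
  rw [Measure.smul_apply, smul_eq_mul] at h1
  have h2 : ENNReal.ofReal em * lam.restrict C Set.univ < ⊤ := lt_of_le_of_lt h1 (by simp)
  by_contra hcon
  simp only [not_lt, top_le_iff] at hcon
  rw [hcon, ENNReal.mul_top (by simpa using hLD.2.2.1)] at h2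
  exact lt_irrefl _ h2

lemma auxH_le_W (Q : Kernel X X) [IsMarkovKernel Q] (C : Set X) (lam : Measure X) (em ep : ℝ)
    (hLD : IsLDSet Q C lam em ep) (hlt : em ≤ ep) (f : X × X → ℝ≥0∞) (hf : Measurable f)
    (hf1 : ∀ z, f z ≤ 1) (m : ℕ) :
    ∀ (G : ℕ → X → ℝ≥0∞) (_ : ∀ i, Measurable (G i)) (p : X × X),
      auxH Q m G f p ≤ auxH Q m G (fun z => f z.swap) p +
        auxW Q C (ENNReal.ofReal (1 - (em / ep) ^ 2)) m G p := by
  classical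
  have hC := hLD.1
  have hem := hLD.2.2.1
  have hep := hLD.2.2.2.1
  have hfs : Measurable (fun z : X × X => f z.swap) := hf.comp measurable_swap
  induction m with
  | zero =>
    intro G hG p
    simp only [auxH, auxW]
    calc _ ≤ G 0 p.1 * G 0 p.2 * 1 := by gcongr; exact hf1 p
      _ ≤ _ := by rw [mul_one]; exact le_add_self
  | succ m ih =>
    intro G hG p
    simp only [auxH, auxW]
    rw [← mul_add]
    gcongr
    have ih' := ih _ (fun i => hG (i + 1))
    have hum := auxH_meas Q m _ (fun i => hG (i + 1)) f hf
    have hvm := auxH_meas Q m _ (fun i => hG (i + 1)) _ hfs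
    have hwm := auxW_meas Q C hC (ENNReal.ofReal (1 - (em / ep) ^ 2)) m _ (fun i => hG (i + 1))
    have hsw := auxH_swap Q m (fun i => G (i + 1)) f
    set u := auxH Q m (fun i => G (i + 1)) f
    set v := auxH Q m (fun i => G (i + 1)) (fun z => f z.swap)
    set r := ENNReal.ofReal (1 - (em / ep) ^ 2) with hr
    set w := auxW Q C r m (fun i => G (i + 1))
    by_cases hp : p ∈ C ×ˢ C
    · have hS : MeasurableSet (C ×ˢ C) := hC.prod hC
      simp only [hp, true_and]
      rw [← lintegral_add_compl u hS, ← lintegral_add_compl v hS,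
        ← lintegral_add_compl (fun z => (if z ∈ C ×ˢ C then r else 1) * w z) hS]
      have e1 : ∫⁻ z in C ×ˢ C, (if z ∈ C ×ˢ C then r else 1) * w z ∂(Q ∥ₖ Q) p
          = r * ∫⁻ z in C ×ˢ C, w z ∂(Q ∥ₖ Q) p := by
        rw [← lintegral_const_mul _ hwm]
        exact setLIntegral_congr_fun hS (fun z hz => by simp only [if_pos hz])
      have e2 : ∫⁻ z in (C ×ˢ C)ᶜ, (if z ∈ C ×ˢ C then r else 1) * w z ∂(Q ∥ₖ Q) p
          = ∫⁻ z in (C ×ˢ C)ᶜ, w z ∂(Q ∥ₖ Q) p := by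
        refine setLIntegral_congr_fun hS.compl (fun z hz => ?_)
        simp only [if_neg hz, one_mul]
      rw [e1, e2]
      have i2 : ∫⁻ z in (C ×ˢ C)ᶜ, u z ∂(Q ∥ₖ Q) p ≤ ∫⁻ z in (C ×ˢ C)ᶜ, v z ∂(Q ∥ₖ Q) p
          + ∫⁻ z in (C ×ˢ C)ᶜ, w z ∂(Q ∥ₖ Q) p := by
        rw [← lintegral_add_left hvm]
        exact lintegral_mono ih'
      have i1 : ∫⁻ z in C ×ˢ C, u z ∂(Q ∥ₖ Q) p ≤ ∫⁻ z in C ×ˢ C, v z ∂(Q ∥ₖ Q) p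
          + r * ∫⁻ z in C ×ˢ C, w z ∂(Q ∥ₖ Q) p := by
        obtain ⟨a, b⟩ := p
        have ha : a ∈ C := hp.1
        have hb : b ∈ C := hp.2
        rw [Kernel.parallelComp_apply]
        simp only
        rw [← Measure.prod_restrict]
        have := aux_LD_finite Q C lam em ep hLD a ha
        obtain ⟨a1, a2⟩ := aux_LD Q C lam em ep hLD a ha
        obtain ⟨b1, b2⟩ := aux_LD Q C lam em ep hLD b hb
        set κ := ENNReal.ofReal em • lam.restrict C with hκ
        refine aux_contract _ (κ.prod κ) (Measure.prod_mono a1 b1) r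
          (ENNReal.ofReal (em / ep) * ENNReal.ofReal (em / ep)) ?_ ?_ u v w hvm ih' ?_
        · have h1 : em / ep ≤ 1 := (div_le_one hep).2 hlt
          have h0 : 0 ≤ em / ep := by positivity
          rw [hr, ← ENNReal.ofReal_mul h0, ← ENNReal.ofReal_add (by nlinarith) (by positivity)]
          rw [← ENNReal.ofReal_one]
          congr 1
          ring
        · have := Measure.prod_mono a2 b2
          rwa [Measure.prod_smul_left, Measure.prod_smul_right, smul_smul] at this
        · rw [← lintegral_prod_swap]
          exact lintegral_congr fun z => (hsw z).symm
      calc _ ≤ _ := add_le_add i1 i2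
        _ = _ := by ring
    · simp only [hp, false_and, if_false, one_mul]
      rw [← lintegral_add_left hvm]
      exact lintegral_mono ih'

lemma aux_intVV (Q : Kernel X X) [IsMarkovKernel Q] (V : X → ℝ≥0∞) (hV : Measurable V)
    (p : X × X) :
    ∫⁻ z, V z.1 * V z.2 ∂((Q ∥ₖ Q) p) = (∫⁻ x, V x ∂(Q p.1)) * ∫⁻ x, V x ∂(Q p.2) := by
  rw [Kernel.parallelComp_apply]
  exact lintegral_prod_mul hV.aemeasurable hV.aemeasurable

lemma aux_G_le (Q : Kernel X X) [IsMarkovKernel Q] (V : X → ℝ≥0∞)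
    (hV1 : ∀ x, 1 ≤ V x) (a b : ℝ≥0∞) (x : X) (h : a * ∫⁻ z, V z ∂(Q x) ≤ b) : a ≤ b := by
  refine le_trans ?_ h
  have : (1 : ℝ≥0∞) ≤ ∫⁻ z, V z ∂(Q x) := by
    calc (1 : ℝ≥0∞) = ∫⁻ z, 1 ∂(Q x) := by simp
      _ ≤ _ := lintegral_mono hV1
  calc a = a * 1 := (mul_one a).symm
    _ ≤ _ := by gcongr

lemma auxH_bound (Q : Kernel X X) [IsMarkovKernel Q] (V : X → ℝ≥0∞) (hV : Measurable V)
    (hV1 : ∀ x, 1 ≤ V x) (m : ℕ) :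
    ∀ (G : ℕ → X → ℝ≥0∞) (U : ℕ → ℝ≥0∞) (_ : ∀ i x, G i x * ∫⁻ z, V z ∂(Q x) ≤ U i * V x)
      (p : X × X), auxH Q m G (fun _ => 1) p ≤
        (∏ i ∈ Finset.range (m + 1), U i ^ 2) * (V p.1 * V p.2) := by
  induction m with
  | zero =>
    intro G U hU p
    have h1 := aux_G_le Q V hV1 _ _ _ (hU 0 p.1)
    have h2 := aux_G_le Q V hV1 _ _ _ (hU 0 p.2)
    simp only [auxH, zero_add, Finset.prod_range_one, mul_one]
    calc _ ≤ _ := mul_le_mul' h1 h2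
      _ = _ := by ring
  | succ m ih =>
    intro G U hU p
    have ih' := ih _ _ (fun i => hU (i + 1))
    rw [Finset.prod_range_succ']
    simp only [auxH]
    calc _ ≤ G 0 p.1 * G 0 p.2 * ∫⁻ z, (∏ i ∈ Finset.range (m + 1), U (i + 1) ^ 2) *
            (V z.1 * V z.2) ∂((Q ∥ₖ Q) p) := by
          gcongr with z
          exact ih' z
      _ = (∏ i ∈ Finset.range (m + 1), U (i + 1) ^ 2) *
          ((G 0 p.1 * ∫⁻ x, V x ∂(Q p.1)) * (G 0 p.2 * ∫⁻ x, V x ∂(Q p.2))) := by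
          rw [lintegral_const_mul _ (by fun_prop), aux_intVV Q V hV]
          ring
      _ ≤ (∏ i ∈ Finset.range (m + 1), U (i + 1) ^ 2) *
          ((U 0 * V p.1) * (U 0 * V p.2)) := by
          exact mul_le_mul' le_rfl (mul_le_mul' (hU 0 p.1) (hU 0 p.2))
      _ = _ := by ring

lemma auxW_le_H (Q : Kernel X X) [IsMarkovKernel Q] (C : Set X) (r : ℝ≥0∞) (hr : r ≤ 1)
    (m : ℕ) :
    ∀ (G : ℕ → X → ℝ≥0∞) (p : X × X), auxW Q C r m G p ≤ auxH Q m G (fun _ => 1) p := by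
  classical
  induction m with
  | zero => intro G p; simp [auxH, auxW]
  | succ m ih =>
    intro G p
    simp only [auxH, auxW]
    gcongr with z
    calc _ ≤ 1 * auxW Q C r m (fun i => G (i + 1)) z := by
          gcongr
          split_ifs <;> simp [hr]
      _ ≤ _ := by rw [one_mul]; exact ih _ z

open Classical in
lemma auxW_bound (Q : Kernel X X) [IsMarkovKernel Q] (C : Set X)
    (r : ℝ≥0∞) (hr : r ≤ 1) (V : X → ℝ≥0∞) (hV : Measurable V)
    (hV1 : ∀ x, 1 ≤ V x) (e : ℝ≥0∞) (m : ℕ) :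
    ∀ (G : ℕ → X → ℝ≥0∞) (_ : ∀ i, Measurable (G i)) (U : ℕ → ℝ≥0∞) (Kp : ℕ → Prop)
      (_ : ∀ i x, G i x * ∫⁻ z, V z ∂(Q x) ≤ U i * V x)
      (_ : ∀ i x, Kp i → x ∉ C → G i x * ∫⁻ z, V z ∂(Q x) ≤ e * U i * V x)
      (p : X × X) (c t : ℕ)
      (_ : c = 0 ∨ 2 * c + t + 2 * (∑ i ∈ Finset.range (m + 1), if Kp i then 0 else 1)
        ≤ m + 1 + (if p ∈ C ×ˢ C then 0 else 1)),
      auxW Q C r m G p ≤ r ^ t * auxH Q m G (fun _ => 1) p +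
        e ^ c * ((∏ i ∈ Finset.range (m + 1), U i ^ 2) * (V p.1 * V p.2)) := by
  induction m with
  | zero =>
    intro G hG U Kp hU hUK p c t h
    have hWH := auxW_le_H Q C r hr 0 G p
    rcases Nat.eq_zero_or_pos c with hc | hc
    · subst hc
      rw [pow_zero, one_mul]
      exact (hWH.trans (auxH_bound Q V hV hV1 0 G U hU p)).trans le_add_self
    rcases Nat.eq_zero_or_pos t with ht | ht
    · subst ht
      rw [pow_zero, one_mul]
      exact hWH.trans le_self_add
    exfalso
    split_ifs at h <;> omega
  | succ m ih =>
    intro G hG U Kp hU hUK p c t h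
    have hWH := auxW_le_H Q C r hr (m + 1) G p
    rcases Nat.eq_zero_or_pos c with hc | hc
    · subst hc
      rw [pow_zero, one_mul]
      exact (hWH.trans (auxH_bound Q V hV hV1 (m + 1) G U hU p)).trans le_add_self
    rcases Nat.eq_zero_or_pos t with ht | ht
    · subst ht
      rw [pow_zero, one_mul]
      exact hWH.trans le_self_add
    clear hWH
    have h := h.resolve_left hc.ne'
    rw [Finset.sum_range_succ'] at h
    have ih' := ih _ (fun i => hG (i + 1)) _ (fun i => Kp (i + 1)) (fun i => hU (i + 1))
      (fun i => hUK (i + 1))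
    have key : ∀ c' : ℕ,
        (∀ z : X × X, (if p ∈ C ×ˢ C ∧ z ∈ C ×ˢ C then r else 1) *
            auxW Q C r m (fun i => G (i + 1)) z ≤
          r ^ t * auxH Q m (fun i => G (i + 1)) (fun _ => 1) z +
          e ^ c' * ((∏ i ∈ Finset.range (m + 1), U (i + 1) ^ 2) * (V z.1 * V z.2))) →
        e ^ c' * ((G 0 p.1 * ∫⁻ x, V x ∂(Q p.1)) * (G 0 p.2 * ∫⁻ x, V x ∂(Q p.2)))
          ≤ e ^ c * ((U 0 * V p.1) * (U 0 * V p.2)) →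
        auxW Q C r (m + 1) G p ≤ r ^ t * auxH Q (m + 1) G (fun _ => 1) p +
          e ^ c * ((∏ i ∈ Finset.range (m + 1 + 1), U i ^ 2) * (V p.1 * V p.2)) := by
      intro c' h1 h2
      rw [Finset.prod_range_succ']
      have hHm := auxH_meas Q m _ (fun i => hG (i + 1)) (fun _ => 1) measurable_const
      simp only [auxH, auxW]
      set P := ∏ i ∈ Finset.range (m + 1), U (i + 1) ^ 2
      calc _ ≤ G 0 p.1 * G 0 p.2 * ∫⁻ z, (r ^ t * auxH Q m (fun i => G (i + 1)) (fun _ => 1) z +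
              e ^ c' * (P * (V z.1 * V z.2))) ∂((Q ∥ₖ Q) p) := by
            gcongr with z
            exact h1 z
        _ = r ^ t * (G 0 p.1 * G 0 p.2 *
              ∫⁻ z, auxH Q m (fun i => G (i + 1)) (fun _ => 1) z ∂((Q ∥ₖ Q) p)) +
            P * (e ^ c' * ((G 0 p.1 * ∫⁻ x, V x ∂(Q p.1)) *
              (G 0 p.2 * ∫⁻ x, V x ∂(Q p.2)))) := by
            rw [lintegral_add_left (by fun_prop), lintegral_const_mul _ hHm,
              lintegral_const_mul _ (by fun_prop), lintegral_const_mul _ (by fun_prop),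
              aux_intVV Q V hV]
            ring
        _ ≤ r ^ t * (G 0 p.1 * G 0 p.2 *
              ∫⁻ z, auxH Q m (fun i => G (i + 1)) (fun _ => 1) z ∂((Q ∥ₖ Q) p)) +
            P * (e ^ c * ((U 0 * V p.1) * (U 0 * V p.2))) := by
            gcongr
        _ = _ := by ring
    by_cases hp : p ∈ C ×ˢ C
    · refine key c ?_ ?_
      · intro z
        by_cases hz : z ∈ C ×ˢ C
        · obtain ⟨t', rfl⟩ : ∃ t', t = t' + 1 := ⟨t - 1, by omega⟩
          have := ih' z c t' (Or.inr (by
            simp only [hp, hz, if_true] at h ⊢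
            omega))
          simp only [hp, hz, and_self, if_true]
          calc _ ≤ r * (r ^ t' * auxH Q m (fun i => G (i + 1)) (fun _ => 1) z + (e ^ c *
              ((∏ i ∈ Finset.range (m + 1), U (i + 1) ^ 2) * (V z.1 * V z.2)))) :=
              mul_le_mul' le_rfl this
            _ = r ^ (t' + 1) * auxH Q m (fun i => G (i + 1)) (fun _ => 1) z + r * (e ^ c *
              ((∏ i ∈ Finset.range (m + 1), U (i + 1) ^ 2) * (V z.1 * V z.2))) := by ring
            _ ≤ _ := add_le_add le_rfl (mul_le_of_le_one_left zero_le hr)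
        · simp only [hz, and_false, if_false, one_mul]
          refine ih' z c t (Or.inr ?_)
          simp only [hp, hz, if_true, if_false] at h ⊢
          omega
      · exact mul_le_mul' le_rfl (mul_le_mul' (hU 0 p.1) (hU 0 p.2))
    · simp only [hp, if_false] at h
      by_cases hK : Kp 0
      · obtain ⟨c', rfl⟩ : ∃ c', c = c' + 1 := ⟨c - 1, by omega⟩
        refine key c' ?_ ?_
        · intro z
          simp only [hp, false_and, if_false, one_mul]
          refine ih' z c' t (Or.inr ?_)
          split_ifs <;> omega
        · rw [pow_succ, mul_assoc (e ^ c') e]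
          refine mul_le_mul' le_rfl ?_
          have hp' : p.1 ∉ C ∨ p.2 ∉ C := by
            by_contra hcon
            push Not at hcon
            exact hp ⟨hcon.1, hcon.2⟩
          rcases hp' with h1 | h2
          · calc _ ≤ _ := mul_le_mul' (hUK 0 p.1 hK h1) (hU 0 p.2)
              _ = _ := by ring
          · calc _ ≤ _ := mul_le_mul' (hU 0 p.1) (hUK 0 p.2 hK h2)
              _ = _ := by ring
      · simp only [hK, if_false] at h
        refine key c ?_ ?_
        · intro z
          simp only [hp, false_and, if_false, one_mul]
          refine ih' z c t (Or.inr ?_)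
          split_ifs <;> omega
        · exact mul_le_mul' le_rfl (mul_le_mul' (hU 0 p.1) (hU 0 p.2))

/-- Product of two one-step predictions. -/
lemma aux_prod_bind (Q : Kernel X X) [IsMarkovKernel Q] (μ μ' : Measure X) [SFinite μ]
    [SFinite μ'] (F : X × X → ℝ≥0∞) (hF : Measurable F) :
    ∫⁻ z, F z ∂((μ.bind (fun x => Q x)).prod (μ'.bind (fun x => Q x))) =
      ∫⁻ p, ∫⁻ z, F z ∂((Q ∥ₖ Q) p) ∂(μ.prod μ') := by
  have hQ : Measurable (fun x => Q x) := Q.measurable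
  have : SFinite (μ'.bind (fun x => Q x)) := inferInstanceAs (SFinite (Q ∘ₘ μ'))
  have hm : Measurable (fun p => ∫⁻ z, F z ∂((Q ∥ₖ Q) p)) := hF.lintegral_kernel
  rw [lintegral_prod _ hF.aemeasurable, lintegral_prod _ hm.aemeasurable,
    Measure.lintegral_bind hQ.aemeasurable hF.lintegral_prod_right'.aemeasurable]
  refine lintegral_congr fun x => ?_
  have h1 : ∀ a, ∫⁻ b, F (a, b) ∂(μ'.bind (fun x => Q x)) = ∫⁻ x', ∫⁻ b, F (a, b) ∂(Q x') ∂μ' :=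
    fun a => Measure.lintegral_bind hQ.aemeasurable (by fun_prop)
  simp only [h1]
  have hj : Measurable (Function.uncurry fun (a x' : X) => ∫⁻ b, F (a, b) ∂(Q x')) := by
    have : Measurable (Function.uncurry (fun (q : X × X) (b : X) => F (q.1, b))) := by
      unfold Function.uncurry
      fun_prop
    exact this.lintegral_kernel_prod_right (κ := Kernel.prodMkLeft X Q)
  rw [lintegral_lintegral_swap hj.aemeasurable]
  refine lintegral_congr fun x' => ?_
  rw [Kernel.parallelComp_apply, lintegral_prod _ hF.aemeasurable]

lemma aux_filtSeq_succ {Y : Type*} (Q : Kernel X X) (g : X → Y → ℝ) (ν : Measure X)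
    (y : ℕ → Y) (n : ℕ) :
    filtSeq Q g ν y (n + 1) =
      filtSeq Q g ((filtSeq Q g ν y 0).bind (fun x => Q x)) (fun i => y (i + 1)) n := by
  induction n with
  | zero => rfl
  | succ n ih =>
    show ((filtSeq Q g ν y (n + 1)).bind (fun x => Q x)).withDensity
      (fun x => ENNReal.ofReal (g x (y (n + 1 + 1)))) = _
    rw [ih]
    rfl

lemma aux_filtSeq_sfinite {Y : Type*} (Q : Kernel X X) [IsMarkovKernel Q] (g : X → Y → ℝ)
    (ν : Measure X) [SFinite ν] (y : ℕ → Y) (n : ℕ) : SFinite (filtSeq Q g ν y n) := by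
  induction n with
  | zero => rw [filtSeq]; infer_instance
  | succ n ih =>
    rw [filtSeq]
    have : SFinite ((filtSeq Q g ν y n).bind (fun x => Q x)) :=
      inferInstanceAs (SFinite (Q ∘ₘ (filtSeq Q g ν y n)))
    infer_instance

lemma aux_filtSeq_H {Y : Type*} (Q : Kernel X X) [IsMarkovKernel Q] (g : X → Y → ℝ)
    (hg : ∀ y, Measurable (fun x => g x y)) (f : X × X → ℝ≥0∞) (hf : Measurable f) (n : ℕ) :
    ∀ (ν ν' : Measure X) [SFinite ν] [SFinite ν'] (y : ℕ → Y),
      ∫⁻ z, f z ∂((filtSeq Q g ν y n).prod (filtSeq Q g ν' y n)) =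
        ∫⁻ p, auxH Q n (fun i x => ENNReal.ofReal (g x (y i))) f p ∂(ν.prod ν') := by
  induction n with
  | zero =>
    intro ν ν' _ _ y
    have := hg (y 0)
    simp only [filtSeq, auxH]
    rw [prod_withDensity (by fun_prop) (by fun_prop),
      lintegral_withDensity_eq_lintegral_mul _ (by fun_prop) hf]
    rfl
  | succ n ih =>
    intro ν ν' _ _ y
    have h0 := hg (y 0)
    rw [aux_filtSeq_succ, aux_filtSeq_succ]
    have s1 := aux_filtSeq_sfinite Q g ν y 0
    have s2 := aux_filtSeq_sfinite Q g ν' y 0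
    have : SFinite ((filtSeq Q g ν y 0).bind (fun x => Q x)) :=
      inferInstanceAs (SFinite (Q ∘ₘ (filtSeq Q g ν y 0)))
    have : SFinite ((filtSeq Q g ν' y 0).bind (fun x => Q x)) :=
      inferInstanceAs (SFinite (Q ∘ₘ (filtSeq Q g ν' y 0)))
    have hH : Measurable (auxH Q n (fun i x => ENNReal.ofReal (g x (y (i + 1)))) f) :=
      auxH_meas Q n _ (fun i => by have := hg (y (i + 1)); fun_prop) f hf
    rw [ih, aux_prod_bind Q _ _ _ hH]
    simp only [auxH, filtSeq]
    rw [prod_withDensity (by fun_prop) (by fun_prop),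
      lintegral_withDensity_eq_lintegral_mul _ (by fun_prop) hH.lintegral_kernel]
    rfl

lemma aux_filtSeq_lower {Y : Type*} (Q : Kernel X X) [IsMarkovKernel Q] (g : X → Y → ℝ)
    (hg : ∀ y, Measurable (fun x => g x y)) (D : Set X) (lam : Measure X) (em ep : ℝ)
    (hLD : IsLDSet Q D lam em ep) (ν : Measure X) (y : ℕ → Y) (n : ℕ) :
    ENNReal.ofReal em ^ n * Phi Q g ν D (y 0) (y 1) *
        ∏ i ∈ Finset.Icc 2 (n + 1), Psi g lam D (y i) ≤ filtSeq Q g ν y (n + 1) D := by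
  have hD := hLD.1
  have hstep : ∀ n, filtSeq Q g ν y (n + 1) D =
      ∫⁻ x, ∫⁻ z in D, ENNReal.ofReal (g z (y (n + 1))) ∂(Q x) ∂(filtSeq Q g ν y n) := by
    intro n
    have := hg (y (n + 1))
    rw [filtSeq, withDensity_apply _ hD, ← lintegral_indicator hD,
      Measure.lintegral_bind Q.measurable.aemeasurable]
    · simp only [lintegral_indicator hD]
    · exact Measurable.aemeasurable (Measurable.indicator (by fun_prop) hD)
  induction n with
  | zero =>
    rw [hstep 0]
    have h0 := hg (y 0)
    have h1 := hg (y 1)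
    have hm : Measurable (fun x => ∫⁻ z in D, ENNReal.ofReal (g z (y 1)) ∂(Q x)) := by
      have : Measurable (fun z => ENNReal.ofReal (g z (y 1))) := by fun_prop
      exact this.setLIntegral_kernel hD
    simp only [filtSeq, Phi]
    rw [lintegral_withDensity_eq_lintegral_mul _ (by fun_prop) hm]
    simp
  | succ n ih =>
    rw [hstep (n + 1), Finset.prod_Icc_succ_top (by omega)]
    calc _ = (ENNReal.ofReal em * Psi g lam D (y (n + 1 + 1))) *
            (ENNReal.ofReal em ^ n * Phi Q g ν D (y 0) (y 1) *
              ∏ i ∈ Finset.Icc 2 (n + 1), Psi g lam D (y i)) := by ring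
      _ ≤ (ENNReal.ofReal em * Psi g lam D (y (n + 1 + 1))) * filtSeq Q g ν y (n + 1) D := by
          gcongr
      _ = ∫⁻ x in D, ENNReal.ofReal em * Psi g lam D (y (n + 1 + 1))
            ∂(filtSeq Q g ν y (n + 1)) := by
          rw [setLIntegral_const]
      _ ≤ ∫⁻ x in D, ∫⁻ z in D, ENNReal.ofReal (g z (y (n + 1 + 1))) ∂(Q x)
            ∂(filtSeq Q g ν y (n + 1)) := by
          refine setLIntegral_mono' hD fun x hx => ?_
          have := (aux_LD Q D lam em ep hLD x hx).1
          calc _ = ∫⁻ z, ENNReal.ofReal (g z (y (n + 1 + 1)))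
                ∂(ENNReal.ofReal em • lam.restrict D) := by
                rw [lintegral_smul_measure]; rfl
            _ ≤ _ := lintegral_mono' this le_rfl
      _ ≤ _ := setLIntegral_le_lintegral _ _

lemma aux_tv (μ ν : Measure X) (B : ℝ≥0∞) [IsFiniteMeasure μ] [IsFiniteMeasure ν]
    (h1 : ∀ A, MeasurableSet A → μ A ≤ ν A + B) (h2 : ∀ A, MeasurableSet A → ν A ≤ μ A + B) :
    ENNReal.ofReal (tvDist μ ν) ≤ B := by
  by_cases hB : B = ⊤
  · simp [hB]
  refine ENNReal.ofReal_le_of_le_toReal ?_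
  have : Nonempty {S : Set X // MeasurableSet S} := ⟨⟨∅, MeasurableSet.empty⟩⟩
  refine ciSup_le fun A => ?_
  have k1 := ENNReal.toReal_mono (by finiteness) (h1 A.1 A.2)
  have k2 := ENNReal.toReal_mono (by finiteness) (h2 A.1 A.2)
  rw [ENNReal.toReal_add (by finiteness) hB] at k1 k2
  rw [abs_sub_le_iff]
  constructor <;> linarith

lemma aux_div (a a' M M' B : ℝ≥0∞) (hM : M ≠ 0) (hM1 : M ≠ ⊤) (hM' : M' ≠ 0) (hM1' : M' ≠ ⊤)
    (h : a * M' ≤ M * a' + B) : M⁻¹ * a ≤ M'⁻¹ * a' + B / (M * M') := by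
  have e1 : M⁻¹ * M = 1 := ENNReal.inv_mul_cancel hM hM1
  have e2 : M'⁻¹ * M' = 1 := ENNReal.inv_mul_cancel hM' hM1'
  calc M⁻¹ * a = M⁻¹ * a * (M'⁻¹ * M') := by rw [e2, mul_one]
    _ = (M⁻¹ * M'⁻¹) * (a * M') := by ring
    _ ≤ (M⁻¹ * M'⁻¹) * (M * a' + B) := by gcongr
    _ = (M⁻¹ * M) * (M'⁻¹ * a') + B * (M⁻¹ * M'⁻¹) := by ring
    _ = _ := by
      rw [e1, one_mul, div_eq_mul_inv, ENNReal.mul_inv (Or.inl hM) (Or.inl hM1)]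

open Classical in
lemma aux_core {Y : Type*} (Q : Kernel X X) [IsMarkovKernel Q] (g : X → Y → ℝ)
    (hg : ∀ y, Measurable (fun x => g x y)) (C : Set X) (lam : Measure X) (em ep : ℝ)
    (hLD : IsLDSet Q C lam em ep) (hlt : em ≤ ep)
    (V : X → ℝ≥0∞) (hV : Measurable V) (hV1 : ∀ x, 1 ≤ V x) (e : ℝ≥0∞) (n : ℕ) (y : ℕ → Y)
    (U : ℕ → ℝ≥0∞) (Kp : ℕ → Prop)
    (hU : ∀ i x, ENNReal.ofReal (g x (y i)) * ∫⁻ z, V z ∂(Q x) ≤ U i * V x)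
    (hUK : ∀ i x, Kp i → x ∉ C →
      ENNReal.ofReal (g x (y i)) * ∫⁻ z, V z ∂(Q x) ≤ e * U i * V x)
    (c t : ℕ)
    (hc : c = 0 ∨ 2 * c + t + 2 * (∑ i ∈ Finset.range (n + 1), if Kp i then 0 else 1) ≤ n + 1)
    (ν ν' : Measure X) [SFinite ν] [SFinite ν'] (A : Set X) (hA : MeasurableSet A) :
    filtSeq Q g ν y n A * filtSeq Q g ν' y n Set.univ ≤
      filtSeq Q g ν y n Set.univ * filtSeq Q g ν' y n A +
      (ENNReal.ofReal (1 - (em / ep) ^ 2) ^ t *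
          (filtSeq Q g ν y n Set.univ * filtSeq Q g ν' y n Set.univ) +
        e ^ c * ((∏ i ∈ Finset.range (n + 1), U i ^ 2) *
          ((∫⁻ x, V x ∂ν) * ∫⁻ x, V x ∂ν'))) := by
  have s1 := aux_filtSeq_sfinite Q g ν y n
  have s2 := aux_filtSeq_sfinite Q g ν' y n
  set r := ENNReal.ofReal (1 - (em / ep) ^ 2) with hr
  have hr1 : r ≤ 1 := by
    rw [hr, ← ENNReal.ofReal_one]
    exact ENNReal.ofReal_le_ofReal (by nlinarith [sq_nonneg (em / ep)])
  have hGm : ∀ i, Measurable (fun x => ENNReal.ofReal (g x (y i))) := fun i => by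
    have := hg (y i)
    fun_prop
  set G : ℕ → X → ℝ≥0∞ := fun i x => ENNReal.ofReal (g x (y i)) with hG
  set f : X × X → ℝ≥0∞ := (A ×ˢ Set.univ).indicator 1 with hfdef
  have hS1 : MeasurableSet (A ×ˢ (Set.univ : Set X)) := hA.prod MeasurableSet.univ
  have hS2 : MeasurableSet ((Set.univ : Set X) ×ˢ A) := MeasurableSet.univ.prod hA
  have hf : Measurable f := measurable_one.indicator hS1
  have hf1 : ∀ z, f z ≤ 1 := fun z => Set.indicator_le_self _ (1 : X × X → ℝ≥0∞) z
  have hfs : (fun z : X × X => f z.swap) = ((Set.univ : Set X) ×ˢ A).indicator 1 := by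
    funext z
    simp only [hfdef, Set.indicator]
    simp
  have hfsm : Measurable (fun z : X × X => f z.swap) := hf.comp measurable_swap
  have i1 : filtSeq Q g ν y n A * filtSeq Q g ν' y n Set.univ =
      ∫⁻ p, auxH Q n G f p ∂(ν.prod ν') := by
    rw [← aux_filtSeq_H Q g hg f hf, hfdef, lintegral_indicator_one hS1, Measure.prod_prod]
  have i2 : filtSeq Q g ν y n Set.univ * filtSeq Q g ν' y n A =
      ∫⁻ p, auxH Q n G (fun z => f z.swap) p ∂(ν.prod ν') := by
    rw [← aux_filtSeq_H Q g hg _ hfsm, hfs, lintegral_indicator_one hS2, Measure.prod_prod]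
  have i3 : filtSeq Q g ν y n Set.univ * filtSeq Q g ν' y n Set.univ =
      ∫⁻ p, auxH Q n G (fun _ => 1) p ∂(ν.prod ν') := by
    rw [← aux_filtSeq_H Q g hg _ measurable_const, lintegral_one, ← Set.univ_prod_univ,
      Measure.prod_prod]
  have m1 := auxH_meas Q n G hGm _ hfsm
  have m2 := auxH_meas Q n G hGm (fun _ => 1) measurable_const
  rw [i1, i2, i3]
  calc _ ≤ ∫⁻ p, (auxH Q n G (fun z => f z.swap) p + (r ^ t * auxH Q n G (fun _ => 1) p +
          e ^ c * ((∏ i ∈ Finset.range (n + 1), U i ^ 2) * (V p.1 * V p.2)))) ∂(ν.prod ν') := by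
        refine lintegral_mono fun p => ?_
        refine (auxH_le_W Q C lam em ep hLD hlt f hf hf1 n G hGm p).trans ?_
        refine add_le_add le_rfl ?_
        exact auxW_bound Q C r hr1 V hV hV1 e n G hGm U Kp hU hUK p c t
          (hc.imp_right fun h => h.trans (Nat.le_add_right _ _))
    _ = _ := by
        rw [lintegral_add_left m1, lintegral_add_left (by fun_prop), lintegral_const_mul _ m2,
          lintegral_const_mul _ (by fun_prop), lintegral_const_mul _ (by fun_prop),
          lintegral_prod_mul hV.aemeasurable hV.aemeasurable]

lemma aux_Ups_le {Y : Type*} (Q : Kernel X X) (g : X → Y → ℝ) (V : X → ℝ)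
    (hV1 : ∀ x, 1 ≤ V x) (A : Set X) (x : X) (hx : x ∈ A) (y : Y) :
    ENNReal.ofReal (g x y) * ∫⁻ z, ENNReal.ofReal (V z) ∂(Q x) ≤
      Ups Q g V A y * ENNReal.ofReal (V x) := by
  have h : ENNReal.ofReal (g x y) * kernelV Q V x / ENNReal.ofReal (V x) ≤ Ups Q g V A y :=
    le_iSup₂ (f := fun x (_ : x ∈ A) =>
      ENNReal.ofReal (g x y) * kernelV Q V x / ENNReal.ofReal (V x)) x hx
  have hpos : 0 < V x := lt_of_lt_of_le one_pos (hV1 x)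
  rwa [ENNReal.div_le_iff (by simpa using hpos) ENNReal.ofReal_ne_top] at h

/-- The choice of the discount constant. -/
lemma aux_choose (η M : ℝ) (hη : η ∈ Set.Ioo (0 : ℝ) 1) (hM : 0 < M) :
    ∃ s : ℝ, 0 < s ∧ s < 1 ∧ (1 - s ^ 2) ^ M = 1 - η ^ (4 : ℝ) := by
  have h4 : 0 < η ^ (4 : ℝ) := Real.rpow_pos_of_pos hη.1 _
  have h4' : η ^ (4 : ℝ) < 1 := Real.rpow_lt_one hη.1.le hη.2 (by norm_num)
  set r0 := (1 - η ^ (4 : ℝ)) ^ (1 / M) with hr0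
  have h1 : 0 < r0 := Real.rpow_pos_of_pos (by linarith) _
  have h2 : r0 < 1 := Real.rpow_lt_one (by linarith) (by linarith) (by positivity)
  refine ⟨Real.sqrt (1 - r0), Real.sqrt_pos.2 (by linarith), ?_, ?_⟩
  · rw [Real.sqrt_lt' one_pos]; linarith
  · rw [Real.sq_sqrt (by linarith)]
    rw [sub_sub_cancel, hr0, ← Real.rpow_mul (by linarith), one_div, inv_mul_cancel₀ hM.ne',
      Real.rpow_one]

lemma aux_total {Y : Type*} (Q : Kernel X X) [IsMarkovKernel Q] (g : X → Y → ℝ)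
    (hg : ∀ y, Measurable (fun x => g x y))
    (V : X → ℝ≥0∞) (hV : Measurable V) (hV1 : ∀ x, 1 ≤ V x) (n : ℕ) (y : ℕ → Y)
    (U : ℕ → ℝ≥0∞)
    (hU : ∀ i x, ENNReal.ofReal (g x (y i)) * ∫⁻ z, V z ∂(Q x) ≤ U i * V x)
    (ν ν' : Measure X) [SFinite ν] [SFinite ν'] :
    filtSeq Q g ν y n Set.univ * filtSeq Q g ν' y n Set.univ ≤
      (∏ i ∈ Finset.range (n + 1), U i ^ 2) * ((∫⁻ x, V x ∂ν) * ∫⁻ x, V x ∂ν') := by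
  have s1 := aux_filtSeq_sfinite Q g ν y n
  have s2 := aux_filtSeq_sfinite Q g ν' y n
  have i3 : filtSeq Q g ν y n Set.univ * filtSeq Q g ν' y n Set.univ =
      ∫⁻ p, auxH Q n (fun i x => ENNReal.ofReal (g x (y i))) (fun _ => 1) p ∂(ν.prod ν') := by
    rw [← aux_filtSeq_H Q g hg _ measurable_const, lintegral_one, ← Set.univ_prod_univ,
      Measure.prod_prod]
  rw [i3]
  calc _ ≤ ∫⁻ p, (∏ i ∈ Finset.range (n + 1), U i ^ 2) * (V p.1 * V p.2) ∂(ν.prod ν') :=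
        lintegral_mono fun p => auxH_bound Q V hV hV1 n _ U hU p
    _ = _ := by
        rw [lintegral_const_mul _ (by fun_prop),
          lintegral_prod_mul hV.aemeasurable hV.aemeasurable]

end aux

/-- Corollary 4 of the paper: under (H2), given an LD-set `D`, `γ ∈ (0,1)` and
`β ∈ (0,γ)`, for any `η ∈ (0,1)` there exists an LD-set `C` such that for any `n ≥ 1`, any
observations `y_{0:n}` with `Σ_{i≤n} 1_K(y_i) ≥ (1+γ)n/2`, and any initial distributions
`ν, ν'` for which the filtering distributions are well defined,
`‖φ_{ν,n} − φ_{ν',n}‖_TV ≤ ρ_C^{βn} + η^{(γ−β)n/2} ∏_{i≤n} Υ_X(y_i)² ν(V) ν'(V) /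
[(ε⁻_D)^{2(n−1)} Φ_{ν,D}(y₀,y₁) Φ_{ν',D}(y₀,y₁) ∏_{i=2}^n Ψ_D(y_i)²]`. -/
theorem forgetting_hmm_stmt5 {X Y : Type*} [MeasurableSpace X] [MeasurableSpace Y]
    (Q : Kernel X X) [IsMarkovKernel Q]
    (g : X → Y → ℝ) (hgmeas : Measurable (Function.uncurry g)) (hgnn : ∀ x y, 0 ≤ g x y)
    (K : Set Y) (V : X → ℝ) (hVmeas : Measurable V) (hV1 : ∀ x, 1 ≤ V x)
    -- (H2): for every `η > 0` there is an LD-set `C` with `Υ_{C^c} ≤ η Υ_X` on `K`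
    (hH2 : ∀ η : ℝ, 0 < η → ∃ (C : Set X) (lamC : Measure X) (emC epC : ℝ),
      IsLDSet Q C lamC emC epC ∧
        ∀ y ∈ K, Ups Q g V Cᶜ y ≤ ENNReal.ofReal η * Ups Q g V Set.univ y)
    (D : Set X) (lamD : Measure X) (emD epD : ℝ) (hD : IsLDSet Q D lamD emD epD)
    (γ β : ℝ) (hγ : γ ∈ Set.Ioo (0 : ℝ) 1) (hβ : β ∈ Set.Ioo (0 : ℝ) γ)
    (η : ℝ) (hη : η ∈ Set.Ioo (0 : ℝ) 1) :
    ∃ (C : Set X) (lamC : Measure X) (emC epC : ℝ), IsLDSet Q C lamC emC epC ∧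
      ∀ n : ℕ, 1 ≤ n → ∀ y : ℕ → Y,
        (1 + γ) * n / 2 ≤
            (∑ i ∈ Finset.range (n + 1), K.indicator (fun _ => (1 : ℝ)) (y i)) →
        ∀ ν ν' : Measure X, IsProbabilityMeasure ν → IsProbabilityMeasure ν' →
        (0 < filtSeq Q g ν y n Set.univ ∧ filtSeq Q g ν y n Set.univ ≠ ⊤) →
        (0 < filtSeq Q g ν' y n Set.univ ∧ filtSeq Q g ν' y n Set.univ ≠ ⊤) →
        ENNReal.ofReal (tvDist (filt Q g ν y n) (filt Q g ν' y n))
          ≤ ENNReal.ofReal ((1 - (emC / epC) ^ 2) ^ (β * n))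
            + (ENNReal.ofReal (η ^ ((γ - β) * n / 2)) *
                (∏ i ∈ Finset.range (n + 1), (Ups Q g V Set.univ (y i)) ^ 2) *
                ((∫⁻ x, ENNReal.ofReal (V x) ∂ν) * ∫⁻ x, ENNReal.ofReal (V x) ∂ν'))
              / (ENNReal.ofReal emD ^ (2 * (n - 1)) *
                  Phi Q g ν D (y 0) (y 1) * Phi Q g ν' D (y 0) (y 1) *
                  ∏ i ∈ Finset.Icc 2 n, (Psi g lamD D (y i)) ^ 2) := by
  classical
  obtain ⟨hη0, hη1⟩ := hη
  obtain ⟨hγ0, hγ1⟩ := hγ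
  obtain ⟨hβ0, hβγ⟩ := hβ
  have hgb : 0 < γ - β := by linarith
  obtain ⟨C, lamC, em0, epC, hC0, hCK⟩ := hH2 (η ^ 2) (by positivity)
  obtain ⟨s, hs0, hs1, hs⟩ := aux_choose η (β * (8 / (γ - β))) ⟨hη0, hη1⟩ (by positivity)
  obtain ⟨hCm, hlC, hem0, hep, hCi⟩ := hC0
  set emC := min em0 (s * epC) with hemC
  have hem : 0 < emC := lt_min hem0 (by positivity)
  have hq : emC / epC ≤ s := by
    rw [div_le_iff₀ hep]; exact min_le_right _ _
  have hq0 : 0 ≤ emC / epC := by positivity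
  have hle : emC ≤ epC := (min_le_right _ _).trans (by nlinarith)
  have hLD : IsLDSet Q C lamC emC epC := by
    refine ⟨hCm, hlC, hem, hep, fun x hx A hA => ⟨?_, (hCi x hx A hA).2⟩⟩
    refine le_trans ?_ (hCi x hx A hA).1
    gcongr
    exact min_le_left _ _
  refine ⟨C, lamC, emC, epC, hLD, ?_⟩
  intro n hn y hy ν ν' hν hν' hM hM'
  have hgy : ∀ y, Measurable (fun x => g x y) := fun y => hgmeas.comp (measurable_id.prodMk measurable_const)
  have hn0 : (0 : ℝ) < n := by exact_mod_cast hn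
  set ρ := 1 - (emC / epC) ^ 2 with hρ
  have hρs : 1 - s ^ 2 ≤ ρ := by rw [hρ]; nlinarith
  have hs2 : 0 < 1 - s ^ 2 := by nlinarith
  have hρ0 : 0 < ρ := lt_of_lt_of_le hs2 hρs
  have hρ1 : ρ ≤ 1 := by rw [hρ]; nlinarith [sq_nonneg (emC / epC)]
  set W : X → ℝ≥0∞ := fun x => ENNReal.ofReal (V x) with hW
  have hWm : Measurable W := by fun_prop
  have hW1 : ∀ x, 1 ≤ W x := fun x => by
    rw [hW, ENNReal.one_le_ofReal]; exact hV1 x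
  set U : ℕ → ℝ≥0∞ := fun i => Ups Q g V Set.univ (y i) with hUdef
  have hU : ∀ i x, ENNReal.ofReal (g x (y i)) * ∫⁻ z, W z ∂(Q x) ≤ U i * W x :=
    fun i x => aux_Ups_le Q g V hV1 Set.univ x (Set.mem_univ x) (y i)
  have hUK : ∀ i x, y i ∈ K → x ∉ C →
      ENNReal.ofReal (g x (y i)) * ∫⁻ z, W z ∂(Q x) ≤ ENNReal.ofReal (η ^ 2) * U i * W x := by
    intro i x hi hx
    refine (aux_Ups_le Q g V hV1 Cᶜ x hx (y i)).trans ?_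
    exact mul_le_mul' (hCK (y i) hi) le_rfl
  have hcore := aux_core Q g hgy C lamC emC epC hLD hle W hWm hW1 (ENNReal.ofReal (η ^ 2)) n y U
    (fun i => y i ∈ K) hU hUK
  set μ := filtSeq Q g ν y n with hμ
  set μ' := filtSeq Q g ν' y n with hμ'
  set P := ∏ i ∈ Finset.range (n + 1), U i ^ 2 with hP
  set N := (∫⁻ x, W x ∂ν) * ∫⁻ x, W x ∂ν' with hN
  set den := ENNReal.ofReal emD ^ (2 * (n - 1)) *
                  Phi Q g ν D (y 0) (y 1) * Phi Q g ν' D (y 0) (y 1) *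
                  ∏ i ∈ Finset.Icc 2 n, (Psi g lamD D (y i)) ^ 2 with hden
  have hdenle : den ≤ μ Set.univ * μ' Set.univ := by
    obtain ⟨n', rfl⟩ : ∃ n', n = n' + 1 := ⟨n - 1, by omega⟩
    have l1 := (aux_filtSeq_lower Q g hgy D lamD emD epD hD ν y n').trans
      (measure_mono (Set.subset_univ D))
    have l2 := (aux_filtSeq_lower Q g hgy D lamD emD epD hD ν' y n').trans
      (measure_mono (Set.subset_univ D))
    refine le_trans (le_of_eq ?_) (mul_le_mul' l1 l2)
    rw [hden, Finset.prod_pow, Nat.add_sub_cancel]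
    ring
  have hMM0 : μ Set.univ * μ' Set.univ ≠ 0 := mul_ne_zero hM.1.ne' hM'.1.ne'
  have hMMt : μ Set.univ * μ' Set.univ ≠ ⊤ := ENNReal.mul_ne_top hM.2 hM'.2
  have hfin : ∀ m : Measure X, m Set.univ ≠ 0 → m Set.univ ≠ ⊤ →
      IsProbabilityMeasure ((m Set.univ)⁻¹ • m) := by
    intro m h0 h1
    constructor
    rw [Measure.smul_apply, smul_eq_mul, ENNReal.inv_mul_cancel h0 h1]
  have hp1 : IsProbabilityMeasure (filt Q g ν y n) := hfin _ hM.1.ne' hM.2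
  have hp2 : IsProbabilityMeasure (filt Q g ν' y n) := hfin _ hM'.1.ne' hM'.2
  set k := (γ - β) * n / 2 with hk
  by_cases hk4 : k < 4
  · -- few observations: the bound is trivial
    have hR : μ Set.univ * μ' Set.univ ≤ P * N :=
      aux_total Q g hgy W hWm hW1 n y U hU ν ν'
    have h1 : (1 : ℝ≥0∞) ≤ P * N / den := by
      calc (1 : ℝ≥0∞) = (μ Set.univ * μ' Set.univ) / (μ Set.univ * μ' Set.univ) :=
            (ENNReal.div_self hMM0 hMMt).symm
        _ ≤ _ := ENNReal.div_le_div hR hdenle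
    have h2 : 1 - η ^ (4 : ℝ) ≤ ρ ^ (β * n) := by
      rw [← hs]
      calc (1 - s ^ 2) ^ (β * (8 / (γ - β))) ≤ (1 - s ^ 2) ^ (β * n) := by
            refine Real.rpow_le_rpow_of_exponent_ge hs2 (by nlinarith) ?_
            gcongr
            rw [le_div_iff₀ hgb]
            linarith
        _ ≤ _ := Real.rpow_le_rpow hs2.le hρs (by positivity)
    have h3 : η ^ (4 : ℝ) ≤ η ^ k := Real.rpow_le_rpow_of_exponent_ge hη0 hη1.le hk4.le
    refine (aux_tv _ _ 1 (fun A _ => prob_le_one.trans le_add_self)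
      (fun A _ => prob_le_one.trans le_add_self)).trans ?_
    calc (1 : ℝ≥0∞) = ENNReal.ofReal 1 := by simp
      _ ≤ ENNReal.ofReal (ρ ^ (β * n) + η ^ k) := ENNReal.ofReal_le_ofReal (by linarith)
      _ ≤ ENNReal.ofReal (ρ ^ (β * n)) + ENNReal.ofReal (η ^ k) := ENNReal.ofReal_add_le
      _ ≤ _ := by
        gcongr
        rw [mul_assoc, mul_div_assoc]
        exact le_mul_of_one_le_right zero_le h1
  · push Not at hk4
    set t := ⌈β * n⌉₊ with ht
    set c := ⌊k - 1⌋₊ with hc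
    have ht1 : β * n ≤ t := Nat.le_ceil _
    have ht2 : (t : ℝ) < β * n + 1 := Nat.ceil_lt_add_one (by positivity)
    have hc1 : (c : ℝ) ≤ k - 1 := Nat.floor_le (by linarith)
    have hc2 : k - 1 < c + 1 := Nat.lt_floor_add_one _
    have hcount : 2 * c + t + 2 * (∑ i ∈ Finset.range (n + 1), if y i ∈ K then 0 else 1)
        ≤ n + 1 := by
      have e1 : ((∑ i ∈ Finset.range (n + 1), if y i ∈ K then 0 else 1 : ℕ) : ℝ) +
          (∑ i ∈ Finset.range (n + 1), K.indicator (fun _ => (1 : ℝ)) (y i)) = n + 1 := by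
        push_cast
        rw [← Finset.sum_add_distrib]
        rw [Finset.sum_congr rfl (g := fun _ => (1 : ℝ))]
        · simp
        · intro i _
          by_cases hi : y i ∈ K <;> simp [hi]
      have e2 : ((2 * c + t + 2 * (∑ i ∈ Finset.range (n + 1), if y i ∈ K then 0 else 1) : ℕ) : ℝ)
          ≤ ((n + 1 : ℕ) : ℝ) := by
        rw [Nat.cast_add, Nat.cast_add, Nat.cast_mul, Nat.cast_mul]
        push_cast at e1 ⊢
        rw [hk] at hc1
        linarith
      exact_mod_cast e2
    have hA1 := hcore c t (Or.inr hcount) ν ν'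
    have hA2 := hcore c t (Or.inr hcount) ν' ν
    set B0 := ENNReal.ofReal ρ ^ t * (μ Set.univ * μ' Set.univ) +
      ENNReal.ofReal (η ^ 2) ^ c * (P * N) with hB0
    refine (aux_tv _ _ (B0 / (μ Set.univ * μ' Set.univ)) ?_ ?_).trans ?_
    · intro A hA
      exact aux_div _ _ _ _ _ hM.1.ne' hM.2 hM'.1.ne' hM'.2 (hA1 A hA)
    · intro A hA
      rw [mul_comm (μ Set.univ)]
      refine aux_div (μ' A) (μ A) (μ' Set.univ) (μ Set.univ) B0 hM'.1.ne' hM'.2 hM.1.ne' hM.2 ?_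
      refine (hA2 A hA).trans (le_of_eq ?_)
      show μ' Set.univ * μ A + (ENNReal.ofReal ρ ^ t * (μ' Set.univ * μ Set.univ) +
        ENNReal.ofReal (η ^ 2) ^ c * (P * ((∫⁻ x, W x ∂ν') * ∫⁻ x, W x ∂ν))) =
          μ' Set.univ * μ A + B0
      rw [hB0, hN, mul_comm (μ' Set.univ) (μ Set.univ),
        mul_comm (∫⁻ x, W x ∂ν') (∫⁻ x, W x ∂ν)]
    · rw [hB0, ENNReal.add_div, ENNReal.mul_div_cancel_right hMM0 hMMt]
      refine add_le_add ?_ ?_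
      · rw [← ENNReal.ofReal_pow hρ0.le]
        refine ENNReal.ofReal_le_ofReal ?_
        rw [← Real.rpow_natCast]
        exact Real.rpow_le_rpow_of_exponent_ge hρ0 hρ1 ht1
      · refine ENNReal.div_le_div ?_ hdenle
        rw [mul_assoc]
        refine mul_le_mul' ?_ le_rfl
        rw [← ENNReal.ofReal_pow (by positivity)]
        refine ENNReal.ofReal_le_ofReal ?_
        rw [← pow_mul, ← Real.rpow_natCast]
        refine Real.rpow_le_rpow_of_exponent_ge hη0 hη1.le ?_
        push_cast
        linarith
end
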